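/- Fix a ∈ ℤ with a ≥ 2. For all f ∈ Ḣ^{a−1}_⋄ and B > 0 there exists C = C(ν, T, ‖f‖_{Ḣ^{a−1}}, a, B) > 0 such that for all θ, θ' ∈ Ḣ^a_⋄ with ‖θ‖_{Ḣ^a} + ‖θ'‖_{Ḣ^a} ≤ B, the quadratic remainder of the linearization satisfies sup_{0≤t≤T} ‖u_{θ'}(t) − u_θ(t) − 𝕀_θ[θ' − θ](t)‖_{Ḣ^a} ≤ C ‖θ' − θ‖²_{Ḣ^a}. -/

import Mathlib

open MeasureTheory Set
open scoped BigOperators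

noncomputable section

namespace NS2D

/-- Nonzero Fourier frequencies of the 2D torus `Ω = 𝕋²`. -/
def Freq : Type := {k : ℤ × ℤ // k ≠ 0}

/-- Squared Euclidean modulus `|k|²` of a frequency. -/
def knormSq (k : Freq) : ℝ := (k.1.1 : ℝ) ^ 2 + (k.1.2 : ℝ) ^ 2

/-- Eigenvalue `λ_k = 4π²|k|²` of the periodic Laplacian `−Δ`. -/
def lam (k : Freq) : ℝ := 4 * Real.pi ^ 2 * knormSq k

/-- A divergence-free mean-zero vector field `u ∈ Ḣ_⋄` (or, more generally, an
element of the scale `Ḣ^α_⋄`) on the torus is represented by its Fourier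
coefficients `c k` along the orthonormal basis
`e_k(x) = |k|⁻¹ (k₂, −k₁) exp(2πi k·x)` of divergence-free fields. -/
abbrev Coef : Type := Freq → ℂ

/-- Negation of a frequency. -/
def fneg (k : Freq) : Freq := ⟨-k.1, neg_ne_zero.mpr k.2⟩

/-- The conjugacy condition expressing that the coefficients `c` represent a
real-valued vector field (note `e_{−k} = − conj e_k`). -/
def IsReal (c : Coef) : Prop := ∀ k, c (fneg k) = - (starRingEnd ℂ) (c k)

/-- Squared homogeneous Sobolev norm `‖·‖²_{Ḣ^α} = Σ_k λ_k^α |c k|²`. -/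
def hSq (α : ℝ) (c : Coef) : ℝ := ∑' k, lam k ^ α * ‖c k‖ ^ 2

/-- Homogeneous Sobolev norm `‖·‖_{Ḣ^α}`. -/
def hN (α : ℝ) (c : Coef) : ℝ := Real.sqrt (hSq α c)

/-- Finiteness of the `Ḣ^α`-norm. -/
def FinH (α : ℝ) (c : Coef) : Prop := Summable fun k => lam k ^ α * ‖c k‖ ^ 2

/-- Membership in `Ḣ^α_⋄` (real-valued field with finite `Ḣ^α`-norm). -/
def MemH (α : ℝ) (c : Coef) : Prop := IsReal c ∧ FinH α c

/-- Membership in `Ḣ^∞_⋄ = C^∞(Ω)² ∩ Ḣ_⋄`: all Sobolev norms are finite. -/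
def MemHinf (c : Coef) : Prop := ∀ α : ℝ, MemH α c

/-- Real `Ḣ^α` inner product `⟨·,·⟩_{Ḣ^α}` (for real-valued fields). -/
def hInner (α : ℝ) (c d : Coef) : ℝ := ∑' k, lam k ^ α * (c k * (starRingEnd ℂ) (d k)).re

/-- The `L²` inner product. -/
def innerC (c d : Coef) : ℂ := ∑' k, c k * (starRingEnd ℂ) (d k)

/-- The unit vector `(k₂, −k₁)/|k|` spanning the divergence-free direction at
frequency `k`. -/
def evec (k : Freq) : ℝ × ℝ :=
  ((k.1.2 : ℝ) / Real.sqrt (knormSq k), -((k.1.1 : ℝ)) / Real.sqrt (knormSq k))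

/-- Euclidean dot product on `ℝ²`. -/
def dotR (a b : ℝ × ℝ) : ℝ := a.1 * b.1 + a.2 * b.2

/-- A frequency as a real vector. -/
def fvec (k : Freq) : ℝ × ℝ := ((k.1.1 : ℝ), (k.1.2 : ℝ))

/-- Fourier coefficients (along the basis `e_k`) of the Leray-projected
transport nonlinearity `B[u,v] = P[(u·∇)v]`:
`(B[u,v])^(k) · ē_k = 2πi Σ_{m+n=k, n≠0} c_m d_n (e_m·n)(e_n·e_k)`. -/
def Bc (c d : Coef) : Coef := fun k =>
  (((2 * Real.pi : ℝ) : ℂ) * Complex.I) *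
    ∑' m : Freq,
      if h : k.1 - m.1 ≠ 0 then
        c m * d ⟨k.1 - m.1, h⟩ *
          (((dotR (evec m) (fvec ⟨k.1 - m.1, h⟩) *
            dotR (evec ⟨k.1 - m.1, h⟩) (evec k) : ℝ)) : ℂ)
      else 0

/-- The Laplacian `Δ` acting on the scale: `(Δu)^(k) = −λ_k û(k)`. -/
def lapC (c : Coef) : Coef := fun k => -((lam k : ℝ) : ℂ) * c k

/-- Continuity of a trajectory `t ↦ u(t)`, `t ∈ [0,T]`, for the `Ḣ^α`-norm:
`u ∈ C([0,T], Ḣ^α_⋄)`. -/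
def ContH (α : ℝ) (T : ℝ) (u : ℝ → Coef) : Prop :=
  ∀ t ∈ Icc (0:ℝ) T, ∀ ε > 0, ∃ δ > 0, ∀ s ∈ Icc (0:ℝ) T,
    |s - t| < δ → hN α (u s - u t) < ε

/-- Membership `u ∈ L²([0,T], Ḣ^α_⋄)`. -/
def MemL2H (α : ℝ) (T : ℝ) (u : ℝ → Coef) : Prop :=
  (∀ t ∈ Ioc (0:ℝ) T, MemH α (u t)) ∧
    IntegrableOn (fun t => hSq α (u t)) (Ioc 0 T)

/-- `u` is a strong solution on `[0,T]` of the (Leray-projected) periodic 2D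
Navier–Stokes equations `du/dt + νAu + B[u,u] = f`, `u(0) = θ`, posed in `Ḣ_⋄`:
the Fourier coefficients satisfy the corresponding system of ODEs on `(0,T]`,
the trajectory is continuous into `Ḣ¹_⋄` (in particular at `t = 0`), and lies
in `L²([0,T], Ḣ²_⋄)`. -/
structure IsNSSol (ν : ℝ) (f : Coef) (T : ℝ) (θ : Coef) (u : ℝ → Coef) : Prop where
  init : u 0 = θ
  real : ∀ t ∈ Icc (0:ℝ) T, IsReal (u t)
  deriv : ∀ (k : Freq), ∀ t ∈ Ioc (0:ℝ) T,
    HasDerivAt (fun s => u s k)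
      (f k - ((ν * lam k : ℝ) : ℂ) * u t k - Bc (u t) (u t) k) t
  contH1 : ContH 1 T u
  memL2H2 : MemL2H 2 T u

/-- `U` solves the linear parabolic equation
`dU/dt − νΔU + B[u₀, U] + B[U, u₁] = g`, `U(0) = ξ`, on `[0,T]`. -/
structure IsLinPSol (ν : ℝ) (u₀ u₁ : ℝ → Coef) (g : ℝ → Coef) (T : ℝ) (ξ : Coef)
    (U : ℝ → Coef) : Prop where
  init : U 0 = ξ
  real : ∀ t ∈ Icc (0:ℝ) T, IsReal (U t)
  deriv : ∀ (k : Freq), ∀ t ∈ Ioc (0:ℝ) T,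
    HasDerivAt (fun s => U s k)
      (g t k - ((ν * lam k : ℝ) : ℂ) * U t k - Bc (u₀ t) (U t) k - Bc (U t) (u₁ t) k) t

/-- `U = 𝕀_θ[ξ]` solves the linearisation of Navier–Stokes along the
trajectory `u₀`: `dU/dt − νΔU + B[u₀,U] + B[U,u₀] = 0`, `U(0) = ξ`. -/
def IsLinSol (ν : ℝ) (u₀ : ℝ → Coef) (T : ℝ) (ξ : Coef) (U : ℝ → Coef) : Prop :=
  IsLinPSol ν u₀ u₀ (fun _ => 0) T ξ U

/-- The heat semigroup `S_t = e^{νtΔ}` on the scale `Ḣ^α_⋄`. -/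
def heatS (ν t : ℝ) (c : Coef) : Coef := fun k =>
  ((Real.exp (-(ν * lam k * t)) : ℝ) : ℂ) * c k

/-- Duhamel representation of the solution of the periodic heat equation
`du/dt − νΔu = g`, `u(0) = h`. -/
def heatSol (ν : ℝ) (g : ℝ → Coef) (h : Coef) : ℝ → Coef := fun t k =>
  ((Real.exp (-(ν * lam k * t)) : ℝ) : ℂ) *
    (h k + ∫ s in (0:ℝ)..t, ((Real.exp (ν * lam k * s) : ℝ) : ℂ) * g s k)

/-- Real-linearity of a map on the coefficient space. -/
def IsLinMap (Λ : Coef → Coef) : Prop :=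
  (∀ c d, Λ (c + d) = Λ c + Λ d) ∧ ∀ (r : ℝ) (c : Coef), Λ (r • c) = r • Λ c

/-- `Λ` defines a compact (linear) operator `Ḣ^α_⋄ → Ḣ^β_⋄`: it is linear,
maps `Ḣ^α_⋄` into `Ḣ^β_⋄`, and the image of the `Ḣ^α`-unit ball is totally
bounded for the `Ḣ^β`-norm. -/
def IsCompactOp (α β : ℝ) (Λ : Coef → Coef) : Prop :=
  IsLinMap Λ ∧ (∀ c, MemH α c → MemH β (Λ c)) ∧
    ∀ ε > 0, ∃ S : Finset Coef, ∀ c, MemH α c → hN α c ≤ 1 →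
      ∃ s ∈ S, hN β (Λ c - s) < ε

/-- The index `a* = |a|+1` if `|a| ≤ 1`, `a* = |a|` if `|a| ≥ 2`. -/
def astar (a : ℤ) : ℤ := if |a| ≤ 1 then |a| + 1 else |a|

/-- `i`-th component of the unit vector `evec k`. -/
def evecC (i : Fin 2) (k : Freq) : ℝ := if i = 0 then (evec k).1 else (evec k).2

/-- Fourier coefficients (over all of `ℤ²`) of the scalar component `u_i` of a
divergence-free field with coefficients `c`. -/
def compCoef (i : Fin 2) (c : Coef) : ℤ × ℤ → ℂ := fun n =>
  if h : n ≠ 0 then c ⟨n, h⟩ * ((evecC i ⟨n, h⟩ : ℝ) : ℂ) else 0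

/-- Convolution: Fourier coefficients of a pointwise product of two scalar
functions. -/
def convC (F G : ℤ × ℤ → ℂ) : ℤ × ℤ → ℂ := fun n => ∑' m : ℤ × ℤ, F m * G (n - m)

/-- Squared homogeneous Sobolev norm of a scalar function given by its Fourier
coefficients over `ℤ²`. -/
def hSqScalar (α : ℝ) (F : ℤ × ℤ → ℂ) : ℝ := ∑' k : Freq, lam k ^ α * ‖F k.1‖ ^ 2

/-- `‖u vᵀ‖²_{Ḣ^α} = Σ_{i,j=1}^2 ‖u_i v_j‖²_{Ḣ^α}`. -/
def hSqMat (α : ℝ) (c d : Coef) : ℝ :=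
  ∑ i : Fin 2, ∑ j : Fin 2, hSqScalar α (convC (compCoef i c) (compCoef j d))

/-- The character `exp(2πi k·x)`. -/
def efun (k : Freq) (x : ℝ × ℝ) : ℂ :=
  Complex.exp ((((2 * Real.pi : ℝ)) : ℂ) * Complex.I *
    ((k.1.1 : ℂ) * (x.1 : ℂ) + (k.1.2 : ℂ) * (x.2 : ℂ)))

/-- Pointwise evaluation of the `i`-th component of the field. -/
def evalComp (i : Fin 2) (c : Coef) (x : ℝ × ℝ) : ℂ :=
  ∑' k, c k * ((evecC i k : ℝ) : ℂ) * efun k x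

/-- Supremum norm (`C⁰`-norm) of the field. -/
def c0N (c : Coef) : ℝ := ⨆ x : ℝ × ℝ, max ‖evalComp 0 c x‖ ‖evalComp 1 c x‖

/-- The partial derivative `∂_j` acting on divergence-free fields. -/
def pderiv (j : Fin 2) (c : Coef) : Coef := fun k =>
  (((2 * Real.pi : ℝ) : ℂ) * Complex.I) *
    (if j = 0 then ((k.1.1 : ℤ) : ℂ) else ((k.1.2 : ℤ) : ℂ)) * c k

/-- `C¹`-norm of the field. -/
def c1N (c : Coef) : ℝ := c0N c + c0N (pderiv 0 c) + c0N (pderiv 1 c)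

/-- Norm of the multiplier space `B^ℓ`: `C^ℓ(Ω)²` for `ℓ ≤ 1` and `Ḣ^ℓ` for
`ℓ ≥ 2`. -/
def bN (ℓ : ℕ) (c : Coef) : ℝ :=
  if ℓ = 0 then c0N c else if ℓ = 1 then c1N c else hN (ℓ : ℝ) c

end NS2D

/-!
Everything happens on Fourier coefficients. By the Sobolev embedding of `Ḣ^r`, `r > 1`, into the
Wiener algebra and Young's inequality for convolutions, `B : Ḣ^s × Ḣ^s → Ḣ^{s-1}` is bounded for
`s > 1`.

The transport term does not contribute to the enstrophy balance: each of the two parts of its triad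
sum is antisymmetric under an exchange of two legs. This bounds the flow in `Ḣ¹`, and energy
estimates for the heat equation forced by `f - B(u, u)` improve the bound to `Ḣ^s`, first up to
`s = 3/2` by interpolation between `Ḣ¹` and `Ḣ²`, then in unit steps.

The difference `v = u_θ' - u_θ` solves `dv/dt - νΔv = -B(u_θ', v) - B(v, u_θ)`, so Gronwall's
inequality gives `‖v‖ ≲ ‖θ' - θ‖` in `Ḣ^s`. The error `r = v - 𝕀_θ[θ' - θ]` starts at `0` and solves
the linearised equation forced by `-B(v, v)`; the same argument gives
`‖r‖² ≲ ‖v‖⁴ ≲ ‖θ' - θ‖⁴`.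
-/

namespace NS2D

open scoped ENNReal NNReal ComplexConjugate

/-! ### Sums in the extended nonnegative reals -/

lemma two_mul_mul_le_sq_add_sq (x y : ℝ≥0∞) : 2 * (x * y) ≤ x ^ 2 + y ^ 2 := by
  rcases eq_or_ne x ∞ with rfl | hx
  · simp
  rcases eq_or_ne y ∞ with rfl | hy
  · simp
  lift x to ℝ≥0 using hx
  lift y to ℝ≥0 using hy
  rw [← mul_assoc]
  exact_mod_cast two_mul_le_add_sq x y

lemma add_sq_le_two_mul (x y : ℝ≥0∞) : (x + y) ^ 2 ≤ 2 * (x ^ 2 + y ^ 2) := by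
  calc (x + y) ^ 2 = x ^ 2 + y ^ 2 + 2 * (x * y) := by ring
    _ ≤ x ^ 2 + y ^ 2 + (x ^ 2 + y ^ 2) := by gcongr; exact two_mul_mul_le_sq_add_sq x y
    _ = 2 * (x ^ 2 + y ^ 2) := (two_mul _).symm

lemma le_of_two_mul_le_two_mul {x y : ℝ≥0∞} (h : 2 * x ≤ 2 * y) : x ≤ y :=
  (ENNReal.mul_le_mul_iff_right two_ne_zero ENNReal.ofNat_ne_top).1 h

lemma sq_tsum_eq_tsum_tsum {ι : Type*} (f : ι → ℝ≥0∞) :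
    (∑' i, f i) ^ 2 = ∑' i, ∑' j, f i * f j := by
  simp only [ENNReal.tsum_mul_left, ENNReal.tsum_mul_right, sq]

lemma tsum_mul_sq_le {ι : Type*} (f g : ι → ℝ≥0∞) :
    (∑' i, f i * g i) ^ 2 ≤ (∑' i, f i ^ 2) * ∑' i, g i ^ 2 := by
  refine le_of_two_mul_le_two_mul ?_
  rw [sq_tsum_eq_tsum_tsum, ← ENNReal.tsum_mul_left]
  calc ∑' i, 2 * ∑' j, f i * g i * (f j * g j)
      ≤ ∑' i, ∑' j, (f i ^ 2 * g j ^ 2 + g i ^ 2 * f j ^ 2) := by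
        refine ENNReal.tsum_le_tsum fun i => ?_
        rw [← ENNReal.tsum_mul_left]
        refine ENNReal.tsum_le_tsum fun j => ?_
        calc 2 * (f i * g i * (f j * g j)) = 2 * ((f i * g j) * (g i * f j)) := by ring
          _ ≤ (f i * g j) ^ 2 + (g i * f j) ^ 2 := two_mul_mul_le_sq_add_sq _ _
          _ = f i ^ 2 * g j ^ 2 + g i ^ 2 * f j ^ 2 := by ring
    _ = 2 * ((∑' i, f i ^ 2) * ∑' i, g i ^ 2) := by
        simp_rw [ENNReal.tsum_add, ENNReal.tsum_mul_left, ENNReal.tsum_mul_right]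
        ring

lemma tsum_conv_sq_le {G : Type*} [AddCommGroup G] (f g : G → ℝ≥0∞) :
    ∑' k, (∑' m, f m * g (k - m)) ^ 2 ≤ (∑' m, f m) ^ 2 * ∑' m, g m ^ 2 := by
  have tsum_translate (m : G) : ∑' k, g (k - m) ^ 2 = ∑' k, g k ^ 2 :=
    (Equiv.subRight m).tsum_eq fun k => g k ^ 2
  refine le_of_two_mul_le_two_mul ?_
  rw [← ENNReal.tsum_mul_left]
  calc ∑' k, 2 * (∑' m, f m * g (k - m)) ^ 2
      ≤ ∑' k, ∑' i, ∑' j, (f i * f j * g (k - i) ^ 2 + f i * f j * g (k - j) ^ 2) := by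
        refine ENNReal.tsum_le_tsum fun k => ?_
        rw [sq_tsum_eq_tsum_tsum, ← ENNReal.tsum_mul_left]
        refine ENNReal.tsum_le_tsum fun i => ?_
        rw [← ENNReal.tsum_mul_left]
        refine ENNReal.tsum_le_tsum fun j => ?_
        calc 2 * (f i * g (k - i) * (f j * g (k - j)))
            = f i * f j * (2 * (g (k - i) * g (k - j))) := by ring
          _ ≤ f i * f j * (g (k - i) ^ 2 + g (k - j) ^ 2) := by
            gcongr; exact two_mul_mul_le_sq_add_sq _ _
          _ = _ := mul_add _ _ _
    _ = ∑' i, ∑' j, ∑' k, (f i * f j * g (k - i) ^ 2 + f i * f j * g (k - j) ^ 2) := by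
        rw [ENNReal.tsum_comm]
        exact tsum_congr fun i => ENNReal.tsum_comm
    _ = 2 * ((∑' m, f m) ^ 2 * ∑' m, g m ^ 2) := by
        rw [sq_tsum_eq_tsum_tsum]
        simp only [ENNReal.tsum_add, ENNReal.tsum_mul_left, tsum_translate,
          ENNReal.tsum_mul_right]
        ring

lemma tsum_conv_sq_le' {G : Type*} [AddCommGroup G] (f g : G → ℝ≥0∞) :
    ∑' k, (∑' m, f m * g (k - m)) ^ 2 ≤ (∑' m, f m ^ 2) * (∑' m, g m) ^ 2 := by
  have conv_comm (k : G) : ∑' m, f m * g (k - m) = ∑' m, g m * f (k - m) := by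
    rw [← (Equiv.subLeft k).tsum_eq]
    simp only [Equiv.subLeft_apply, sub_sub_cancel, mul_comm]
  simp only [conv_comm]
  exact (tsum_conv_sq_le g f).trans_eq (mul_comm _ _)

lemma summable_of_tsum_enorm_ne_top {ι E : Type*} [NormedAddCommGroup E] [CompleteSpace E]
    {f : ι → E} (h : ∑' i, ‖f i‖ₑ ≠ ∞) : Summable f :=
  .of_norm ((ENNReal.summable_toReal h).congr fun _ => toReal_enorm _)

lemma tsum_ofReal_le_of_hasSum_zero {ι : Type*} {L R I : ι → ℝ} (hL : ∀ i, 0 ≤ L i)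
    (hR : ∀ i, 0 ≤ R i) (hI : HasSum I 0) (h : ∀ i, L i ≤ R i - I i) :
    ∑' i, ENNReal.ofReal (L i) ≤ ∑' i, ENNReal.ofReal (R i) := by
  rcases eq_or_ne (∑' i, ENNReal.ofReal (R i)) ∞ with htop | htop
  · exact htop ▸ le_top
  have hRs : Summable R :=
    (ENNReal.summable_toReal htop).congr fun i => ENNReal.toReal_ofReal (hR i)
  have hRI : HasSum (fun i => R i - I i) (∑' i, R i) := by
    simpa only [sub_zero] using hRs.hasSum.sub hI
  have hLs : Summable L := .of_nonneg_of_le hL h hRI.summable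
  rw [← ENNReal.ofReal_tsum_of_nonneg hL hLs, ← ENNReal.ofReal_tsum_of_nonneg hR hRs,
    ← hRI.tsum_eq]
  exact ENNReal.ofReal_le_ofReal (hLs.tsum_le_tsum h hRI.summable)

/-! ### Frequencies and Sobolev norms -/

instance : Countable Freq := inferInstanceAs (Countable {k : ℤ × ℤ // k ≠ 0})

/-- The wave vector `2πn` of a frequency `n ∈ ℤ²`, as a complex number, so that the Euclidean
geometry of frequencies is that of `ℂ`. -/
def waveVec (n : ℤ × ℤ) : ℂ := ((2 * Real.pi : ℝ) : ℂ) * ⟨n.1, n.2⟩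

lemma waveVec_re (n : ℤ × ℤ) : (waveVec n).re = 2 * Real.pi * n.1 := Complex.re_ofReal_mul _ _

lemma waveVec_im (n : ℤ × ℤ) : (waveVec n).im = 2 * Real.pi * n.2 := Complex.im_ofReal_mul _ _

lemma waveVec_add (m n : ℤ × ℤ) : waveVec (m + n) = waveVec m + waveVec n := by
  apply Complex.ext <;>
    simp only [waveVec_re, waveVec_im, Complex.add_re, Complex.add_im, Prod.fst_add, Prod.snd_add,
      Int.cast_add, mul_add]

lemma waveVec_neg (n : ℤ × ℤ) : waveVec (-n) = -waveVec n := by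
  apply Complex.ext <;>
    simp only [waveVec_re, waveVec_im, Complex.neg_re, Complex.neg_im, Prod.fst_neg, Prod.snd_neg,
      Int.cast_neg, mul_neg]

lemma norm_waveVec_sq (k : Freq) : ‖waveVec k.1‖ ^ 2 = lam k := by
  rw [← Complex.normSq_eq_norm_sq, Complex.normSq_apply, waveVec_re, waveVec_im, lam, knormSq]
  ring

lemma enorm_waveVec_le_add_sub (k m : ℤ × ℤ) :
    ‖waveVec k‖ₑ ≤ ‖waveVec m‖ₑ + ‖waveVec (k - m)‖ₑ := by
  simpa only [← waveVec_add, add_sub_cancel] using enorm_add_le (waveVec m) (waveVec (k - m))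

lemma one_le_knormSq (k : Freq) : 1 ≤ knormSq k := by
  obtain ⟨⟨x, y⟩, h⟩ := k
  have hpos : 0 < x ^ 2 + y ^ 2 := by
    rcases not_and_or.1 (mt Prod.ext_iff.2 h) with hx | hy
    · have : x ≠ 0 := hx
      positivity
    · have : y ≠ 0 := hy
      positivity
  have hone : 1 ≤ x ^ 2 + y ^ 2 := hpos
  simp only [knormSq]
  exact_mod_cast hone

lemma one_le_lam (k : Freq) : 1 ≤ lam k := by
  have hpi : 1 ≤ 4 * Real.pi ^ 2 := by nlinarith [Real.pi_gt_three]
  exact one_le_mul_of_one_le_of_one_le hpi (one_le_knormSq k)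

lemma lam_pos (k : Freq) : 0 < lam k := one_pos.trans_le (one_le_lam k)

lemma norm_waveVec_pos (k : Freq) : 0 < ‖waveVec k.1‖ :=
  norm_pos_iff.2 fun h => (lam_pos k).ne' (by simp [← norm_waveVec_sq, h])

lemma summable_lam_rpow_neg {r : ℝ} (hr : 1 < r) : Summable fun k => lam k ^ (-r) := by
  let v (k : Freq) : Fin 2 → ℤ := ![k.1.1, k.1.2]
  have v_injective : Function.Injective v := fun k k' h =>
    Subtype.ext (Prod.ext (congrFun h 0) (congrFun h 1))
  have norm_v_pos (k : Freq) : 0 < ‖v k‖ := norm_pos_iff.2 fun h =>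
    k.2 (Prod.ext (congrFun h 0) (congrFun h 1))
  have abs_le (x : ℝ) : |x| ≤ |2 * Real.pi * x| := by
    rw [abs_mul, abs_of_pos Real.two_pi_pos]
    exact le_mul_of_one_le_left (abs_nonneg x) (by linarith [Real.pi_gt_three])
  have norm_v_le (k : Freq) : ‖v k‖ ≤ ‖waveVec k.1‖ := by
    rw [pi_norm_le_iff_of_nonneg (norm_nonneg _), Fin.forall_fin_two]
    constructor
    · exact (abs_le k.1.1).trans (waveVec_re k.1 ▸ Complex.abs_re_le_norm _)
    · exact (abs_le k.1.2).trans (waveVec_im k.1 ▸ Complex.abs_im_le_norm _)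
  have h := EisensteinSeries.summable_one_div_norm_rpow (k := 2 * r) (by linarith)
  refine (h.comp_injective v_injective).of_nonneg_of_le
    (fun k => Real.rpow_nonneg (lam_pos k).le _) fun k => ?_
  rw [← norm_waveVec_sq, ← Real.rpow_natCast, ← Real.rpow_mul (norm_nonneg _)]
  exact (Real.rpow_le_rpow_of_nonpos (norm_v_pos k) (norm_v_le k)
    (by push_cast; linarith)).trans_eq (by push_cast; ring_nf; rfl)

/-- The Laplace eigenvalue `λ_k` as an extended nonnegative real. -/
def elam (k : Freq) : ℝ≥0∞ := ENNReal.ofReal (lam k)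

lemma one_le_elam (k : Freq) : 1 ≤ elam k := ENNReal.one_le_ofReal.2 (one_le_lam k)

lemma elam_ne_zero (k : Freq) : elam k ≠ 0 := (one_pos.trans_le (one_le_elam k)).ne'

lemma elam_ne_top (k : Freq) : elam k ≠ ∞ := ENNReal.ofReal_ne_top

lemma elam_rpow_eq_ofReal (k : Freq) (s : ℝ) : elam k ^ s = ENNReal.ofReal (lam k ^ s) :=
  ENNReal.ofReal_rpow_of_pos (lam_pos k)

lemma enorm_waveVec_rpow_sq (k : Freq) (s : ℝ) : (‖waveVec k.1‖ₑ ^ s) ^ 2 = elam k ^ s := by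
  rw [elam, ← norm_waveVec_sq, ENNReal.ofReal_pow (norm_nonneg _), ofReal_norm,
    ← ENNReal.rpow_mul_natCast, ← ENNReal.rpow_natCast_mul, mul_comm]

/-- The squared Sobolev norm `‖c‖²_{Ḣ^s}` with values in `[0, ∞]`; unlike the real-valued `hSq` it
is meaningful for every coefficient sequence. -/
def ehSq (s : ℝ) (c : Coef) : ℝ≥0∞ := ∑' k, elam k ^ s * ‖c k‖ₑ ^ 2

lemma elam_rpow_mul_enorm_sq (s : ℝ) (c : Coef) (k : Freq) :
    elam k ^ s * ‖c k‖ₑ ^ 2 = ENNReal.ofReal (lam k ^ s * ‖c k‖ ^ 2) := by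
  rw [elam_rpow_eq_ofReal, ENNReal.ofReal_mul (Real.rpow_nonneg (lam_pos k).le s),
    ENNReal.ofReal_pow (norm_nonneg _), ofReal_norm]

lemma lam_rpow_mul_norm_sq_nonneg (s : ℝ) (c : Coef) (k : Freq) : 0 ≤ lam k ^ s * ‖c k‖ ^ 2 :=
  mul_nonneg (Real.rpow_nonneg (lam_pos k).le s) (sq_nonneg _)

lemma hSq_nonneg (s : ℝ) (c : Coef) : 0 ≤ hSq s c := tsum_nonneg (lam_rpow_mul_norm_sq_nonneg s c)

lemma FinH.ehSq_eq {s : ℝ} {c : Coef} (h : FinH s c) : ehSq s c = ENNReal.ofReal (hSq s c) := by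
  simp only [ehSq, elam_rpow_mul_enorm_sq]
  exact (ENNReal.ofReal_tsum_of_nonneg (lam_rpow_mul_norm_sq_nonneg s c) h).symm

lemma FinH.ehSq_ne_top {s : ℝ} {c : Coef} (h : FinH s c) : ehSq s c ≠ ∞ :=
  h.ehSq_eq ▸ ENNReal.ofReal_ne_top

lemma finH_of_ehSq_ne_top {s : ℝ} {c : Coef} (h : ehSq s c ≠ ∞) : FinH s c := by
  simp only [ehSq, elam_rpow_mul_enorm_sq] at h
  exact (ENNReal.summable_toReal h).congr fun k =>
    ENNReal.toReal_ofReal (lam_rpow_mul_norm_sq_nonneg s c k)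

lemma ehSq_mono {s r : ℝ} (h : s ≤ r) (c : Coef) : ehSq s c ≤ ehSq r c := by
  unfold ehSq
  gcongr with k
  exact one_le_elam k

lemma FinH.mono {s r : ℝ} (h : s ≤ r) {c : Coef} (hc : FinH r c) : FinH s c :=
  finH_of_ehSq_ne_top (ne_top_of_le_ne_top hc.ehSq_ne_top (ehSq_mono h c))

lemma ehSq_neg (s : ℝ) (c : Coef) : ehSq s (-c) = ehSq s c := by
  simp only [ehSq, Pi.neg_apply, enorm_neg]

lemma ehSq_add_le (s : ℝ) (c d : Coef) : ehSq s (c + d) ≤ 2 * (ehSq s c + ehSq s d) := by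
  unfold ehSq
  rw [← ENNReal.tsum_add, ← ENNReal.tsum_mul_left]
  refine ENNReal.tsum_le_tsum fun k => ?_
  calc elam k ^ s * ‖c k + d k‖ₑ ^ 2
      ≤ elam k ^ s * (2 * (‖c k‖ₑ ^ 2 + ‖d k‖ₑ ^ 2)) := by
        gcongr
        exact (pow_le_pow_left' (enorm_add_le _ _) 2).trans (add_sq_le_two_mul _ _)
    _ = 2 * (elam k ^ s * ‖c k‖ₑ ^ 2 + elam k ^ s * ‖d k‖ₑ ^ 2) := by ring

lemma ehSq_sub_le (s : ℝ) (c d : Coef) : ehSq s (c - d) ≤ 2 * (ehSq s c + ehSq s d) := by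
  simpa only [sub_eq_add_neg, ehSq_neg] using ehSq_add_le s c (-d)

lemma ehSq_sub_ne_top {s : ℝ} {c d : Coef} (hc : ehSq s c ≠ ∞) (hd : ehSq s d ≠ ∞) :
    ehSq s (c - d) ≠ ∞ :=
  ne_top_of_le_ne_top (by finiteness) (ehSq_sub_le s c d)

lemma rpow_half_sq (x : ℝ≥0∞) (s : ℝ) : (x ^ (s / 2)) ^ 2 = x ^ s := by
  rw [← ENNReal.rpow_mul_natCast, Nat.cast_ofNat, div_mul_cancel₀ s two_ne_zero]

lemma ehSq_midpoint_sq_le (r s : ℝ) (c : Coef) :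
    ehSq ((r + s) / 2) c ^ 2 ≤ ehSq r c * ehSq s c := by
  have h := tsum_mul_sq_le (fun k => elam k ^ (r / 2) * ‖c k‖ₑ)
    (fun k => elam k ^ (s / 2) * ‖c k‖ₑ)
  simp only [mul_pow, rpow_half_sq] at h
  refine le_of_eq_of_le (congrArg (· ^ 2) (tsum_congr fun k => ?_)) h
  rw [add_div, ENNReal.rpow_add _ _ (elam_ne_zero k) (elam_ne_top k)]
  ring

lemma tsum_elam_rpow_neg_ne_top {r : ℝ} (hr : 1 < r) : ∑' k, elam k ^ (-r) ≠ ∞ := by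
  simp only [elam_rpow_eq_ofReal]
  exact (summable_lam_rpow_neg hr).tsum_ofReal_ne_top

lemma tsum_enorm_sq_le (r : ℝ) (c : Coef) :
    (∑' k, ‖c k‖ₑ) ^ 2 ≤ (∑' k, elam k ^ (-r)) * ehSq r c := by
  have h := tsum_mul_sq_le (fun k => elam k ^ (-r / 2)) (fun k => elam k ^ (r / 2) * ‖c k‖ₑ)
  simp only [mul_pow, rpow_half_sq] at h
  refine le_of_eq_of_le (congrArg (· ^ 2) (tsum_congr fun k => ?_)) h
  rw [← mul_assoc, ← ENNReal.rpow_add _ _ (elam_ne_zero k) (elam_ne_top k), ← add_div,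
    neg_add_cancel, zero_div, ENNReal.rpow_zero, one_mul]

/-- Extension of a coefficient sequence to all of `ℤ²` by zero at the zero frequency. -/
def extendZero (c : Coef) : ℤ × ℤ → ℂ := Function.extend Subtype.val c 0

lemma extendZero_coe (c : Coef) (k : Freq) : extendZero c k.1 = c k :=
  Subtype.val_injective.extend_apply c 0 k

lemma extendZero_zero (c : Coef) : extendZero c 0 = 0 :=
  Function.extend_apply' c (0 : ℤ × ℤ → ℂ) 0 fun ⟨k, hk⟩ => k.2 hk

lemma extendZero_add (c d : Coef) : extendZero (c + d) = extendZero c + extendZero d := by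
  have h := Function.extend_add (Subtype.val : Freq → ℤ × ℤ) c d 0 0
  rwa [add_zero] at h

lemma tsum_freq_eq {α : Type*} [AddCommMonoid α] [TopologicalSpace α]
    {F : ℤ × ℤ → α} (h : F 0 = 0) : ∑' k : Freq, F k.1 = ∑' n, F n :=
  Subtype.val_injective.tsum_eq fun n hn => ⟨⟨n, fun h0 => hn (h0 ▸ h)⟩, rfl⟩

lemma tsum_enorm_extendZero (c : Coef) : ∑' n, ‖extendZero c n‖ₑ = ∑' k, ‖c k‖ₑ := by
  rw [← tsum_freq_eq (by simp only [extendZero_zero, enorm_zero])]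
  simp only [extendZero_coe]

lemma tsum_enorm_waveVec_rpow_mul_sq (s : ℝ) (c : Coef) :
    ∑' n, (‖waveVec n‖ₑ ^ s * ‖extendZero c n‖ₑ) ^ 2 = ehSq s c := by
  rw [← tsum_freq_eq (by simp [extendZero_zero])]
  simp only [mul_pow, enorm_waveVec_rpow_sq, extendZero_coe, ehSq]

/-! ### The transport nonlinearity -/

/-- The inner product of the wave vectors of two frequencies. -/
def waveDot (m n : ℤ × ℤ) : ℝ := (waveVec m * conj (waveVec n)).re

/-- The determinant of the wave vectors of two frequencies, taken in the order `(n, m)` to match the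
orientation of `evec`. -/
def waveDet (m n : ℤ × ℤ) : ℝ := (waveVec m * conj (waveVec n)).im

lemma abs_waveDot_le (m n : ℤ × ℤ) : |waveDot m n| ≤ ‖waveVec m‖ * ‖waveVec n‖ :=
  (Complex.abs_re_le_norm _).trans_eq (by rw [norm_mul, Complex.norm_conj])

lemma abs_waveDet_le (m n : ℤ × ℤ) : |waveDet m n| ≤ ‖waveVec m‖ * ‖waveVec n‖ :=
  (Complex.abs_im_le_norm _).trans_eq (by rw [norm_mul, Complex.norm_conj])

lemma norm_waveVec (k : Freq) : ‖waveVec k.1‖ = 2 * Real.pi * √(knormSq k) := by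
  rw [← Real.sqrt_sq (norm_nonneg _), norm_waveVec_sq, lam,
    show 4 * Real.pi ^ 2 = (2 * Real.pi) ^ 2 by ring, Real.sqrt_mul (sq_nonneg _),
    Real.sqrt_sq Real.two_pi_pos.le]

lemma sqrt_knormSq_ne_zero (k : Freq) : √(knormSq k) ≠ 0 :=
  (Real.sqrt_pos.2 (one_pos.trans_le (one_le_knormSq k))).ne'

lemma two_pi_mul_dotR_evec_fvec (m n : Freq) :
    2 * Real.pi * dotR (evec m) (fvec n) = waveDet m.1 n.1 / ‖waveVec m.1‖ := by
  have hm := sqrt_knormSq_ne_zero m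
  simp only [norm_waveVec, waveDet, Complex.mul_im, Complex.conj_re, Complex.conj_im, waveVec_re,
    waveVec_im, dotR, evec, fvec]
  field_simp
  ring

lemma dotR_evec_evec (m n : Freq) :
    dotR (evec m) (evec n) = waveDot m.1 n.1 / (‖waveVec m.1‖ * ‖waveVec n.1‖) := by
  have hm := sqrt_knormSq_ne_zero m
  have hn := sqrt_knormSq_ne_zero n
  simp only [norm_waveVec, waveDot, Complex.mul_re, Complex.conj_re, Complex.conj_im, waveVec_re,
    waveVec_im, dotR, evec]
  field_simp
  ring

/-- The Fourier coefficients (up to a unimodular constant) of the stream function of `c`. -/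
def streamCoef (c : Coef) (n : ℤ × ℤ) : ℂ := extendZero c n / (‖waveVec n‖ : ℝ)

/-- The contribution of the frequency pair `(m, k - m)` to the coefficient of `B[c, d]` at `k`. -/
def transportTerm (c d : Coef) (k m : ℤ × ℤ) : ℂ :=
  streamCoef c m * streamCoef d (k - m) *
    ((waveDet m (k - m) * waveDot (k - m) k / ‖waveVec k‖ : ℝ) : ℂ)

lemma streamCoef_zero (c : Coef) : streamCoef c 0 = 0 := by
  rw [streamCoef, extendZero_zero, zero_div]

lemma streamCoef_coe (c : Coef) (k : Freq) : streamCoef c k.1 = c k / (‖waveVec k.1‖ : ℝ) := by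
  rw [streamCoef, extendZero_coe]

lemma streamCoef_add (c d : Coef) (n : ℤ × ℤ) :
    streamCoef (c + d) n = streamCoef c n + streamCoef d n := by
  rw [streamCoef, extendZero_add, Pi.add_apply, add_div, streamCoef, streamCoef]

lemma Bc_eq_tsum_transportTerm (c d : Coef) (k : Freq) :
    Bc c d k = Complex.I * ∑' m, transportTerm c d k.1 m := by
  rw [← tsum_freq_eq (by simp [transportTerm, streamCoef_zero]), Bc, ← tsum_mul_left,
    ← tsum_mul_left]
  refine tsum_congr fun m => ?_
  split_ifs with h
  · have factor (n : Freq) :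
        ((2 * Real.pi : ℝ) : ℂ) * Complex.I *
            (c m * d n * ((dotR (evec m) (fvec n) * dotR (evec n) (evec k) : ℝ) : ℂ)) =
          Complex.I * (streamCoef c m.1 * streamCoef d n.1 *
            ((waveDet m.1 n.1 * waveDot n.1 k.1 / ‖waveVec k.1‖ : ℝ) : ℂ)) := by
      have hdet := congrArg Complex.ofReal (two_pi_mul_dotR_evec_fvec m n)
      rw [streamCoef_coe, streamCoef_coe, dotR_evec_evec]
      push_cast at hdet ⊢
      linear_combination (Complex.I * c m * d n * waveDot n.1 k.1 /
        ((‖waveVec n.1‖ : ℂ) * ‖waveVec k.1‖)) * hdet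
    exact factor ⟨k.1 - m.1, h⟩
  · rw [transportTerm, not_not.1 h, streamCoef_zero, mul_zero, mul_zero, zero_mul, mul_zero]

lemma enorm_transportTerm_le (c d : Coef) (k m : ℤ × ℤ) :
    ‖transportTerm c d k m‖ₑ ≤
      ‖extendZero c m‖ₑ * (‖waveVec (k - m)‖ₑ * ‖extendZero d (k - m)‖ₑ) := by
  have hdet : |waveDet m (k - m)| / ‖waveVec m‖ ≤ ‖waveVec (k - m)‖ :=
    div_le_of_le_mul₀ (norm_nonneg _) (norm_nonneg _) (mul_comm ‖waveVec m‖ _ ▸ abs_waveDet_le _ _)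
  have hdot : |waveDot (k - m) k| / (‖waveVec (k - m)‖ * ‖waveVec k‖) ≤ 1 :=
    div_le_one_of_le₀ (abs_waveDot_le _ _) (by positivity)
  simp only [← ofReal_norm]
  rw [← ENNReal.ofReal_mul (norm_nonneg _), ← ENNReal.ofReal_mul (norm_nonneg _)]
  refine ENNReal.ofReal_le_ofReal ?_
  calc ‖transportTerm c d k m‖
      = ‖extendZero c m‖ * ‖extendZero d (k - m)‖ * (|waveDet m (k - m)| / ‖waveVec m‖) *
          (|waveDot (k - m) k| / (‖waveVec (k - m)‖ * ‖waveVec k‖)) := by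
        simp only [transportTerm, streamCoef, norm_mul, norm_div, Complex.norm_real,
          Real.norm_eq_abs, abs_norm]
        ring
    _ ≤ ‖extendZero c m‖ * ‖extendZero d (k - m)‖ * ‖waveVec (k - m)‖ * 1 := by gcongr
    _ = ‖extendZero c m‖ * (‖waveVec (k - m)‖ * ‖extendZero d (k - m)‖) := by ring

/-- The convolution majorant `(|ĉ| ∗ |2πn||d̂|)(k)` of the coefficients of `B[c, d]`. -/
def transportMajorant (c d : Coef) (k : ℤ × ℤ) : ℝ≥0∞ :=
  ∑' m, ‖extendZero c m‖ₑ * (‖waveVec (k - m)‖ₑ * ‖extendZero d (k - m)‖ₑ)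

lemma enorm_Bc_le (c d : Coef) (k : Freq) : ‖Bc c d k‖ₑ ≤ transportMajorant c d k.1 := by
  rw [Bc_eq_tsum_transportTerm, enorm_mul, enorm_eq_nnnorm Complex.I, Complex.nnnorm_I,
    ENNReal.coe_one, one_mul]
  exact enorm_tsum_le_tsum_enorm.trans (ENNReal.tsum_le_tsum (enorm_transportTerm_le c d k.1))

lemma rpow_sub_one_mul_le {s : ℝ} (hs : 1 ≤ s) {x y z : ℝ≥0∞} (h : x ≤ y + z) :
    x ^ (s - 1) * z ≤ 2 ^ (s - 1) * (y ^ s + z ^ s) := by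
  calc x ^ (s - 1) * z ≤ (y + z) ^ (s - 1) * (y + z) ^ (1 : ℝ) := by
        rw [ENNReal.rpow_one]
        exact mul_le_mul' (ENNReal.rpow_le_rpow h (sub_nonneg.2 hs)) le_add_self
    _ = (y + z) ^ s := by
        rw [← ENNReal.rpow_add_of_nonneg _ _ (sub_nonneg.2 hs) zero_le_one, sub_add_cancel]
    _ ≤ 2 ^ (s - 1) * (y ^ s + z ^ s) := ENNReal.rpow_add_le_mul_rpow_add_rpow _ _ hs

lemma waveVec_rpow_mul_transportMajorant_le {s : ℝ} (hs : 1 ≤ s) (c d : Coef) (k : ℤ × ℤ) :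
    ‖waveVec k‖ₑ ^ (s - 1) * transportMajorant c d k ≤
      2 ^ (s - 1) * (∑' m, ‖waveVec m‖ₑ ^ s * ‖extendZero c m‖ₑ * ‖extendZero d (k - m)‖ₑ +
        ∑' m, ‖extendZero c m‖ₑ * (‖waveVec (k - m)‖ₑ ^ s * ‖extendZero d (k - m)‖ₑ)) := by
  rw [transportMajorant, ← ENNReal.tsum_mul_left, ← ENNReal.tsum_add, ← ENNReal.tsum_mul_left]
  refine ENNReal.tsum_le_tsum fun m => ?_
  calc ‖waveVec k‖ₑ ^ (s - 1) *
        (‖extendZero c m‖ₑ * (‖waveVec (k - m)‖ₑ * ‖extendZero d (k - m)‖ₑ))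
      = ‖waveVec k‖ₑ ^ (s - 1) * ‖waveVec (k - m)‖ₑ *
          (‖extendZero c m‖ₑ * ‖extendZero d (k - m)‖ₑ) := by ring
    _ ≤ 2 ^ (s - 1) * (‖waveVec m‖ₑ ^ s + ‖waveVec (k - m)‖ₑ ^ s) *
          (‖extendZero c m‖ₑ * ‖extendZero d (k - m)‖ₑ) := by
        gcongr ?_ * _
        exact rpow_sub_one_mul_le hs (enorm_waveVec_le_add_sub k m)
    _ = _ := by ring

lemma tsum_transportMajorant_sq_le {s : ℝ} (hs : 1 ≤ s) (c d : Coef) :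
    ∑' k : Freq, elam k ^ (s - 1) * transportMajorant c d k.1 ^ 2 ≤
      2 * (2 ^ (s - 1)) ^ 2 *
        (ehSq s c * (∑' k, ‖d k‖ₑ) ^ 2 + (∑' k, ‖c k‖ₑ) ^ 2 * ehSq s d) := by
  calc ∑' k : Freq, elam k ^ (s - 1) * transportMajorant c d k.1 ^ 2
      = ∑' k : Freq, (‖waveVec k.1‖ₑ ^ (s - 1) * transportMajorant c d k.1) ^ 2 := by
        simp only [mul_pow, enorm_waveVec_rpow_sq]
    _ ≤ ∑' k, (‖waveVec k‖ₑ ^ (s - 1) * transportMajorant c d k) ^ 2 :=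
        ENNReal.tsum_comp_le_tsum_of_injective Subtype.val_injective
          fun k => (‖waveVec k‖ₑ ^ (s - 1) * transportMajorant c d k) ^ 2
    _ ≤ ∑' k, (2 ^ (s - 1)) ^ 2 * (2 *
          ((∑' m, ‖waveVec m‖ₑ ^ s * ‖extendZero c m‖ₑ * ‖extendZero d (k - m)‖ₑ) ^ 2 +
          (∑' m, ‖extendZero c m‖ₑ *
            (‖waveVec (k - m)‖ₑ ^ s * ‖extendZero d (k - m)‖ₑ)) ^ 2)) := by
        refine ENNReal.tsum_le_tsum fun k => ?_
        refine (pow_le_pow_left' (waveVec_rpow_mul_transportMajorant_le hs c d k) 2).trans ?_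
        rw [mul_pow]
        gcongr
        exact add_sq_le_two_mul _ _
    _ ≤ (2 ^ (s - 1)) ^ 2 * (2 *
          ((∑' m, (‖waveVec m‖ₑ ^ s * ‖extendZero c m‖ₑ) ^ 2) * (∑' m, ‖extendZero d m‖ₑ) ^ 2 +
          (∑' m, ‖extendZero c m‖ₑ) ^ 2 *
            ∑' m, (‖waveVec m‖ₑ ^ s * ‖extendZero d m‖ₑ) ^ 2)) := by
        rw [ENNReal.tsum_mul_left, ENNReal.tsum_mul_left, ENNReal.tsum_add]
        gcongr
        · exact tsum_conv_sq_le' (fun m => ‖waveVec m‖ₑ ^ s * ‖extendZero c m‖ₑ) _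
        · exact tsum_conv_sq_le _ fun m => ‖waveVec m‖ₑ ^ s * ‖extendZero d m‖ₑ
    _ = _ := by
        rw [tsum_enorm_waveVec_rpow_mul_sq, tsum_enorm_waveVec_rpow_mul_sq, tsum_enorm_extendZero,
          tsum_enorm_extendZero]
        ring

lemma exists_transportMajorant_le {s r : ℝ} (hs : 1 ≤ s) (hr : 1 < r) :
    ∃ K : ℝ≥0, ∀ c d : Coef, ∑' k : Freq, elam k ^ (s - 1) * transportMajorant c d k.1 ^ 2 ≤
      K * (ehSq s c * ehSq r d + ehSq r c * ehSq s d) := by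
  have hr' := tsum_elam_rpow_neg_ne_top hr
  have hs' : (2 : ℝ≥0∞) ^ (s - 1) ≠ ∞ :=
    ENNReal.rpow_ne_top_of_nonneg (sub_nonneg.2 hs) ENNReal.ofNat_ne_top
  obtain ⟨K, hK⟩ : ∃ K : ℝ≥0, (K : ℝ≥0∞) = 2 * (2 ^ (s - 1)) ^ 2 * ∑' k, elam k ^ (-r) :=
    ⟨_, ENNReal.coe_toNNReal (by finiteness)⟩
  refine ⟨K, fun c d => ?_⟩
  calc _ ≤ 2 * (2 ^ (s - 1)) ^ 2 *
        (ehSq s c * (∑' k, ‖d k‖ₑ) ^ 2 + (∑' k, ‖c k‖ₑ) ^ 2 * ehSq s d) :=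
        tsum_transportMajorant_sq_le hs c d
    _ ≤ 2 * (2 ^ (s - 1)) ^ 2 * (ehSq s c * ((∑' k, elam k ^ (-r)) * ehSq r d) +
          (∑' k, elam k ^ (-r)) * ehSq r c * ehSq s d) := by
        gcongr <;> exact tsum_enorm_sq_le r _
    _ = _ := by rw [hK]; ring

lemma exists_ehSq_Bc_le {s r : ℝ} (hs : 1 ≤ s) (hr : 1 < r) :
    ∃ K : ℝ≥0, ∀ c d : Coef,
      ehSq (s - 1) (Bc c d) ≤ K * (ehSq s c * ehSq r d + ehSq r c * ehSq s d) := by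
  obtain ⟨K, hK⟩ := exists_transportMajorant_le hs hr
  refine ⟨K, fun c d => le_trans ?_ (hK c d)⟩
  unfold ehSq
  gcongr with k
  exact enorm_Bc_le c d k

lemma exists_ehSq_Bc_le_mul {s : ℝ} (hs : 1 < s) :
    ∃ K : ℝ≥0, ∀ c d : Coef, ehSq (s - 1) (Bc c d) ≤ K * (ehSq s c * ehSq s d) := by
  obtain ⟨K, hK⟩ := exists_ehSq_Bc_le hs.le hs
  refine ⟨2 * K, fun c d => (hK c d).trans_eq ?_⟩
  push_cast
  ring

lemma transportMajorant_ne_top {s : ℝ} (hs : 1 < s) {c d : Coef} (hc : ehSq s c ≠ ∞)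
    (hd : ehSq s d ≠ ∞) (k : Freq) : transportMajorant c d k.1 ≠ ∞ := by
  obtain ⟨K, hK⟩ := exists_transportMajorant_le hs.le hs
  have hk : elam k ^ (s - 1) * transportMajorant c d k.1 ^ 2 ≠ ∞ :=
    ne_top_of_le_ne_top (by finiteness) ((ENNReal.le_tsum k).trans (hK c d))
  intro htop
  rw [htop, ENNReal.top_pow two_ne_zero, ENNReal.mul_top] at hk
  · exact hk rfl
  · exact (ENNReal.rpow_pos (elam_ne_zero k).pos (elam_ne_top k)).ne'

lemma summable_transportTerm {s : ℝ} (hs : 1 < s) {c d : Coef} (hc : ehSq s c ≠ ∞)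
    (hd : ehSq s d ≠ ∞) (k : Freq) : Summable (transportTerm c d k.1) :=
  summable_of_tsum_enorm_ne_top <| ne_top_of_le_ne_top (transportMajorant_ne_top hs hc hd k)
    (ENNReal.tsum_le_tsum (enorm_transportTerm_le c d k.1))

lemma Bc_add_left {s : ℝ} (hs : 1 < s) {c c' d : Coef} (hc : ehSq s c ≠ ∞) (hc' : ehSq s c' ≠ ∞)
    (hd : ehSq s d ≠ ∞) : Bc (c + c') d = Bc c d + Bc c' d := by
  funext k
  simp only [Pi.add_apply, Bc_eq_tsum_transportTerm]
  rw [← mul_add,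
    ← (summable_transportTerm hs hc hd k).tsum_add (summable_transportTerm hs hc' hd k)]
  simp only [transportTerm, streamCoef_add, add_mul]

lemma Bc_add_right {s : ℝ} (hs : 1 < s) {c d d' : Coef} (hc : ehSq s c ≠ ∞) (hd : ehSq s d ≠ ∞)
    (hd' : ehSq s d' ≠ ∞) : Bc c (d + d') = Bc c d + Bc c d' := by
  funext k
  simp only [Pi.add_apply, Bc_eq_tsum_transportTerm]
  rw [← mul_add,
    ← (summable_transportTerm hs hc hd k).tsum_add (summable_transportTerm hs hc hd' k)]
  simp only [transportTerm, streamCoef_add, mul_add, add_mul]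

/-! ### The enstrophy cancellation -/

lemma waveDot_self (n : ℤ × ℤ) : waveDot n n = ‖waveVec n‖ ^ 2 := by
  rw [waveDot, Complex.mul_conj, Complex.ofReal_re, Complex.normSq_eq_norm_sq]

lemma waveDot_comm (m n : ℤ × ℤ) : waveDot n m = waveDot m n := by
  simp only [waveDot, Complex.mul_re, Complex.conj_re, Complex.conj_im]
  ring

lemma waveDot_add_right (m n p : ℤ × ℤ) : waveDot m (n + p) = waveDot m n + waveDot m p := by
  simp only [waveDot, waveVec_add, map_add, mul_add, Complex.add_re]

lemma waveDet_swap (m n : ℤ × ℤ) : waveDet n m = -waveDet m n := by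
  simp only [waveDet, Complex.mul_im, Complex.conj_re, Complex.conj_im]
  ring

lemma waveDet_neg_add_right (m n : ℤ × ℤ) : waveDet m (-(m + n)) = -waveDet m n := by
  simp only [waveDet, waveVec_neg, waveVec_add, map_neg, map_add, Complex.mul_im, Complex.neg_re,
    Complex.neg_im, Complex.add_re, Complex.add_im, Complex.conj_re, Complex.conj_im]
  ring

lemma enorm_waveDot_le (m n : ℤ × ℤ) : ‖waveDot m n‖ₑ ≤ ‖waveVec m‖ₑ * ‖waveVec n‖ₑ := by
  rw [← enorm_mul, ← ofReal_norm, ← ofReal_norm, norm_mul]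
  exact ENNReal.ofReal_le_ofReal (abs_waveDot_le m n)

lemma enorm_waveDet_le (m n : ℤ × ℤ) : ‖waveDet m n‖ₑ ≤ ‖waveVec m‖ₑ * ‖waveVec n‖ₑ := by
  rw [← enorm_mul, ← ofReal_norm, ← ofReal_norm, norm_mul]
  exact ENNReal.ofReal_le_ofReal (abs_waveDet_le m n)

lemma norm_waveVec_mul_streamCoef (c : Coef) (n : ℤ × ℤ) :
    (‖waveVec n‖ : ℂ) * streamCoef c n = extendZero c n := by
  rcases eq_or_ne n 0 with rfl | hn
  · rw [streamCoef_zero, mul_zero, extendZero_zero]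
  · exact mul_div_cancel₀ _ (Complex.ofReal_ne_zero.2 (norm_waveVec_pos ⟨n, hn⟩).ne')

lemma enorm_waveVec_mul_streamCoef (c : Coef) (n : ℤ × ℤ) :
    ‖waveVec n‖ₑ * ‖streamCoef c n‖ₑ = ‖extendZero c n‖ₑ := by
  rw [← norm_waveVec_mul_streamCoef, enorm_mul, ← ofReal_norm (waveVec n),
    ← ofReal_norm (‖waveVec n‖ : ℂ), Complex.norm_real, norm_norm]

/-- The contribution of the triad `(m, n, -(m + n))` to `⟨B[c, c], c⟩_{Ḣ¹}`, up to the factor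
`-i`. -/
def triadTerm (c : Coef) (p : (ℤ × ℤ) × (ℤ × ℤ)) : ℂ :=
  streamCoef c p.1 * streamCoef c p.2 * streamCoef c (-(p.1 + p.2)) *
    ((waveDet p.1 p.2 * waveDot p.2 (p.1 + p.2) * ‖waveVec (p.1 + p.2)‖ ^ 2 : ℝ) : ℂ)

/-- The part of `triadTerm` carrying `|n|²` in `n · (m + n) = |n|² + m · n`.
Its sum over all triads vanishes by antisymmetry in the legs `n` and `-(m + n)`. -/
def triadTermNormSq (c : Coef) (p : (ℤ × ℤ) × (ℤ × ℤ)) : ℂ :=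
  streamCoef c p.1 * streamCoef c p.2 * streamCoef c (-(p.1 + p.2)) *
    ((waveDet p.1 p.2 * ‖waveVec p.2‖ ^ 2 * ‖waveVec (p.1 + p.2)‖ ^ 2 : ℝ) : ℂ)

/-- The part of `triadTerm` carrying `m · n` in `n · (m + n) = |n|² + m · n`.
Its sum over all triads vanishes by antisymmetry in the legs `m` and `n`. -/
def triadTermDot (c : Coef) (p : (ℤ × ℤ) × (ℤ × ℤ)) : ℂ :=
  streamCoef c p.1 * streamCoef c p.2 * streamCoef c (-(p.1 + p.2)) *
    ((waveDet p.1 p.2 * waveDot p.1 p.2 * ‖waveVec (p.1 + p.2)‖ ^ 2 : ℝ) : ℂ)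

lemma triadTerm_eq_add (c : Coef) (p : (ℤ × ℤ) × (ℤ × ℤ)) :
    triadTerm c p = triadTermNormSq c p + triadTermDot c p := by
  simp only [triadTerm, triadTermNormSq, triadTermDot, waveDot_add_right, waveDot_self,
    waveDot_comm p.1 p.2]
  push_cast
  ring

/-- The involution `(m, n) ↦ (m, -(m + n))`, exchanging two legs of a triad. -/
def triadReflect : (ℤ × ℤ) × (ℤ × ℤ) ≃ (ℤ × ℤ) × (ℤ × ℤ) :=
  Equiv.prodShear (Equiv.refl _) fun m => (Equiv.addLeft m).trans (Equiv.neg _)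

lemma triadReflect_apply (p : (ℤ × ℤ) × (ℤ × ℤ)) :
    triadReflect p = (p.1, -(p.1 + p.2)) := rfl

lemma triadTermNormSq_reflect (c : Coef) (p : (ℤ × ℤ) × (ℤ × ℤ)) :
    triadTermNormSq c (triadReflect p) = -triadTermNormSq c p := by
  have hsum : p.1 + -(p.1 + p.2) = -p.2 := by abel
  simp only [triadReflect_apply, triadTermNormSq, hsum, neg_neg, waveDet_neg_add_right,
    waveVec_neg, norm_neg]
  push_cast
  ring

lemma triadTermDot_swap (c : Coef) (p : (ℤ × ℤ) × (ℤ × ℤ)) :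
    triadTermDot c p.swap = -triadTermDot c p := by
  simp only [triadTermDot, Prod.fst_swap, Prod.snd_swap, waveDet_swap p.1 p.2,
    waveDot_comm p.1 p.2, add_comm p.2 p.1]
  push_cast
  ring

lemma hasSum_zero_of_comp_equiv_eq_neg {ι E : Type*} [AddCommGroup E] [TopologicalSpace E]
    [IsTopologicalAddGroup E] [T2Space E] [IsAddTorsionFree E] {F : ι → E} (hF : Summable F)
    (e : ι ≃ ι) (h : ∀ p, F (e p) = -F p) : HasSum F 0 := by
  have htsum := e.tsum_eq F
  simp only [h, tsum_neg] at htsum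
  exact self_eq_neg.1 htsum.symm ▸ hF.hasSum

/-- A majorant of `triadTerm`, in which the vorticity gradient falls on the leg `-(m + n)`. -/
def triadMajorant (c : Coef) (p : (ℤ × ℤ) × (ℤ × ℤ)) : ℝ≥0∞ :=
  ‖extendZero c p.1‖ₑ * (‖waveVec p.2‖ₑ * ‖extendZero c p.2‖ₑ) *
    (‖waveVec (p.1 + p.2)‖ₑ ^ 2 * ‖extendZero c (-(p.1 + p.2))‖ₑ)

lemma enorm_ofReal_complex (x : ℝ) : ‖(x : ℂ)‖ₑ = ‖x‖ₑ := by
  rw [← ofReal_norm, ← ofReal_norm, Complex.norm_real]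

lemma enorm_triadTerm_le (c : Coef) (p : (ℤ × ℤ) × (ℤ × ℤ)) :
    ‖triadTerm c p‖ₑ ≤ triadMajorant c p := by
  have hneg := enorm_waveVec_mul_streamCoef c (-(p.1 + p.2))
  rw [waveVec_neg, enorm_neg] at hneg
  calc ‖triadTerm c p‖ₑ = ‖streamCoef c p.1‖ₑ * ‖streamCoef c p.2‖ₑ *
        ‖streamCoef c (-(p.1 + p.2))‖ₑ * (‖waveDet p.1 p.2‖ₑ * ‖waveDot p.2 (p.1 + p.2)‖ₑ *
          ‖waveVec (p.1 + p.2)‖ₑ ^ 2) := by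
        simp only [triadTerm, enorm_mul, enorm_ofReal_complex, enorm_pow, enorm_norm]
    _ ≤ ‖streamCoef c p.1‖ₑ * ‖streamCoef c p.2‖ₑ * ‖streamCoef c (-(p.1 + p.2))‖ₑ *
        (‖waveVec p.1‖ₑ * ‖waveVec p.2‖ₑ * (‖waveVec p.2‖ₑ * ‖waveVec (p.1 + p.2)‖ₑ) *
          ‖waveVec (p.1 + p.2)‖ₑ ^ 2) := by
        gcongr
        · exact enorm_waveDet_le _ _
        · exact enorm_waveDot_le _ _
    _ = triadMajorant c p := by
        rw [triadMajorant, ← hneg, ← enorm_waveVec_mul_streamCoef, ← enorm_waveVec_mul_streamCoef]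
        ring

lemma enorm_triadTermNormSq_le (c : Coef) (p : (ℤ × ℤ) × (ℤ × ℤ)) :
    ‖triadTermNormSq c p‖ₑ ≤ triadMajorant c (triadReflect p) := by
  have hsum : p.1 + -(p.1 + p.2) = -p.2 := by abel
  calc ‖triadTermNormSq c p‖ₑ = ‖streamCoef c p.1‖ₑ * ‖streamCoef c p.2‖ₑ *
        ‖streamCoef c (-(p.1 + p.2))‖ₑ * (‖waveDet p.1 p.2‖ₑ * ‖waveVec p.2‖ₑ ^ 2 *
          ‖waveVec (p.1 + p.2)‖ₑ ^ 2) := by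
        simp only [triadTermNormSq, enorm_mul, enorm_ofReal_complex, enorm_pow, enorm_norm]
    _ ≤ ‖streamCoef c p.1‖ₑ * ‖streamCoef c p.2‖ₑ * ‖streamCoef c (-(p.1 + p.2))‖ₑ *
        (‖waveVec p.1‖ₑ * ‖waveVec p.2‖ₑ * ‖waveVec p.2‖ₑ ^ 2 *
          ‖waveVec (p.1 + p.2)‖ₑ ^ 2) := by
        gcongr
        exact enorm_waveDet_le _ _
    _ = triadMajorant c (triadReflect p) := by
        simp only [triadReflect_apply, triadMajorant, hsum, neg_neg]
        rw [← enorm_waveVec_mul_streamCoef, ← enorm_waveVec_mul_streamCoef,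
          ← enorm_waveVec_mul_streamCoef]
        simp only [waveVec_neg, enorm_neg]
        ring

lemma extendZero_neg_eq {c : Coef} (hc : IsReal c) (k : Freq) :
    extendZero c (-k.1) = -conj (c k) :=
  (extendZero_coe c (fneg k)).trans (hc k)

lemma enorm_extendZero_neg {c : Coef} (hc : IsReal c) (k : Freq) :
    ‖extendZero c (-k.1)‖ₑ = ‖c k‖ₑ := by
  rw [extendZero_neg_eq hc, enorm_neg, ← ofReal_norm, Complex.norm_conj, ofReal_norm]

/-- The parametrisation of triads by the output frequency `k = m + n` and `m`. -/
def triadEquiv : (ℤ × ℤ) × (ℤ × ℤ) ≃ (ℤ × ℤ) × (ℤ × ℤ) :=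
  (Equiv.prodComm _ _).trans (Equiv.prodShear (Equiv.refl _) Equiv.subRight)

lemma triadEquiv_apply (k m : ℤ × ℤ) : triadEquiv (k, m) = (m, k - m) := rfl

lemma tsum_triadMajorant_eq (c : Coef) :
    ∑' p, triadMajorant c p =
      ∑' k : Freq, elam k * ‖extendZero c (-k.1)‖ₑ * transportMajorant c c k.1 := by
  have hlam (k : Freq) : ‖waveVec k.1‖ₑ ^ 2 = elam k := by
    simpa only [ENNReal.rpow_one] using enorm_waveVec_rpow_sq k 1
  rw [← triadEquiv.tsum_eq, ENNReal.tsum_prod']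
  simp only [triadEquiv_apply, triadMajorant, add_sub_cancel, ENNReal.tsum_mul_right]
  change ∑' k, transportMajorant c c k * _ = _
  rw [← tsum_freq_eq (by rw [neg_zero, extendZero_zero, enorm_zero, mul_zero, mul_zero])]
  simp only [hlam, mul_comm (transportMajorant c c _)]

lemma tsum_triadMajorant_ne_top {c : Coef} (hr : IsReal c) (hc : ehSq 2 c ≠ ∞) :
    ∑' p, triadMajorant c p ≠ ∞ := by
  obtain ⟨K, hK⟩ := exists_transportMajorant_le le_rfl one_lt_two
  have hc1 : ehSq 1 c ≠ ∞ := ne_top_of_le_ne_top hc (ehSq_mono one_le_two c)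
  have hB : ∑' k : Freq, transportMajorant c c k.1 ^ 2 ≠ ∞ := by
    refine ne_top_of_le_ne_top ?_ (le_of_eq_of_le ?_ (hK c c))
    · finiteness
    · simp only [sub_self, ENNReal.rpow_zero, one_mul]
  refine ne_top_of_le_ne_top (ENNReal.add_ne_top.2 ⟨hc, hB⟩) ?_
  rw [tsum_triadMajorant_eq, ehSq, ← ENNReal.tsum_add]
  refine ENNReal.tsum_le_tsum fun k => ?_
  rw [enorm_extendZero_neg hr, ENNReal.rpow_ofNat, ← mul_pow]
  exact le_mul_of_one_le_left' one_le_two |>.trans (two_mul_mul_le_sq_add_sq _ _)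

lemma hasSum_triadTerm {c : Coef} (hr : IsReal c) (hc : ehSq 2 c ≠ ∞) :
    HasSum (triadTerm c) 0 := by
  have hmaj := tsum_triadMajorant_ne_top hr hc
  have hF : Summable (triadTerm c) := summable_of_tsum_enorm_ne_top <|
    ne_top_of_le_ne_top hmaj (ENNReal.tsum_le_tsum (enorm_triadTerm_le c))
  have hF₁ : Summable (triadTermNormSq c) := summable_of_tsum_enorm_ne_top <|
    ne_top_of_le_ne_top (triadReflect.tsum_eq (triadMajorant c) ▸ hmaj)
      (ENNReal.tsum_le_tsum (enorm_triadTermNormSq_le c))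
  have hF₂ : Summable (triadTermDot c) := (hF.sub hF₁).congr fun p => by
    rw [triadTerm_eq_add, add_sub_cancel_left]
  have h₁ := hasSum_zero_of_comp_equiv_eq_neg hF₁ triadReflect (triadTermNormSq_reflect c)
  have h₂ := hasSum_zero_of_comp_equiv_eq_neg hF₂ (Equiv.prodComm _ _) (triadTermDot_swap c)
  simpa only [← triadTerm_eq_add, add_zero] using h₁.add h₂

lemma lam_mul_Bc_mul_conj {c : Coef} (hr : IsReal c) (k : Freq) :
    (lam k : ℂ) * (Bc c c k * conj (c k)) =
      -Complex.I * ∑' m, triadTerm c (triadEquiv (k.1, m)) := by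
  have hconj : conj (c k) = -((‖waveVec k.1‖ : ℂ) * streamCoef c (-k.1)) := by
    have h := norm_waveVec_mul_streamCoef c (-k.1)
    rw [waveVec_neg, norm_neg, extendZero_neg_eq hr] at h
    rw [h, neg_neg]
  rw [Bc_eq_tsum_transportTerm, hconj, ← norm_waveVec_sq]
  simp only [← tsum_mul_left, ← tsum_mul_right]
  refine tsum_congr fun m => ?_
  have hk : (‖waveVec k.1‖ : ℂ) ≠ 0 := Complex.ofReal_ne_zero.2 (norm_waveVec_pos k).ne'
  simp only [triadEquiv_apply, triadTerm, transportTerm, add_sub_cancel]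
  push_cast
  field_simp

theorem hInner_one_Bc_self {c : Coef} (hr : IsReal c) (hc : ehSq 2 c ≠ ∞) :
    hInner 1 (Bc c c) c = 0 := by
  have hF := (triadEquiv.hasSum_iff (f := triadTerm c)).2 (hasSum_triadTerm hr hc)
  have hsum : HasSum (fun k => (-Complex.I * ∑' m, triadTerm c (triadEquiv (k, m))).re) 0 := by
    have h := (hF.prod_fiberwise fun k => (hF.summable.prod_factor k).hasSum).mul_left (-Complex.I)
    simpa only [mul_zero, Complex.zero_re, Function.comp_apply] using Complex.hasSum_re h
  rw [← hsum.tsum_eq, ← tsum_freq_eq (by simp [triadEquiv_apply, triadTerm, streamCoef_zero])]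
  refine tsum_congr fun k => ?_
  rw [← lam_mul_Bc_mul_conj hr, Complex.re_ofReal_mul, Real.rpow_one]

/-! ### Parabolic energy estimates -/

lemma two_mul_re_mul_conj_le {μ : ℝ} (hμ : 0 < μ) (w z : ℂ) :
    2 * (w * conj z).re ≤ μ * ‖z‖ ^ 2 + μ⁻¹ * ‖w‖ ^ 2 := by
  have hre : (w * conj z).re ≤ ‖w‖ * ‖z‖ := by
    simpa only [norm_mul, Complex.norm_conj] using Complex.re_le_norm (w * conj z)
  have hsq : μ⁻¹ * (‖w‖ - μ * ‖z‖) ^ 2 =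
      μ * ‖z‖ ^ 2 + μ⁻¹ * ‖w‖ ^ 2 - 2 * (‖w‖ * ‖z‖) := by
    field_simp
    ring
  have : 0 ≤ μ⁻¹ * (‖w‖ - μ * ‖z‖) ^ 2 := by positivity
  linarith

lemma two_mul_inner_damped_le {μ : ℝ} (hμ : 0 < μ) (z g b : ℂ) :
    2 * inner ℝ z (g - b - μ * z) ≤
      μ⁻¹ * ‖g‖ ^ 2 - μ * ‖z‖ ^ 2 - 2 * (b * conj z).re := by
  have hz : (z * conj z).re = ‖z‖ ^ 2 := by
    rw [Complex.mul_conj, Complex.ofReal_re, Complex.normSq_eq_norm_sq]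
  have hinner : inner ℝ z (g - b - μ * z) =
      (g * conj z).re - (b * conj z).re - μ * ‖z‖ ^ 2 := by
    rw [Complex.inner, sub_mul, sub_mul, mul_assoc, Complex.sub_re, Complex.sub_re,
      Complex.re_ofReal_mul, hz]
  linarith [two_mul_re_mul_conj_le hμ g z]

lemma aestronglyMeasurable_forcing {t : ℝ} {μ : ℂ} {z g : ℝ → ℂ} (hz : ContinuousOn z (Icc 0 t))
    (hd : ∀ x ∈ Ioo 0 t, HasDerivAt z (g x - μ * z x) x) :
    AEStronglyMeasurable g (volume.restrict (Ioc 0 t)) := by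
  have hz' : AEStronglyMeasurable z (volume.restrict (Ioc 0 t)) :=
    (hz.mono Ioc_subset_Icc_self).aestronglyMeasurable measurableSet_Ioc
  refine ((stronglyMeasurable_deriv z).aestronglyMeasurable.add (hz'.const_mul μ)).congr ?_
  rw [← restrict_Ioo_eq_restrict_Ioc]
  filter_upwards [ae_restrict_mem measurableSet_Ioo] with x hx
  rw [Pi.add_apply, (hd x hx).deriv, sub_add_cancel]

lemma integrableOn_norm_sq {t : ℝ} {z : ℝ → ℂ} (hz : ContinuousOn z (Icc 0 t)) :
    IntegrableOn (fun x => ‖z x‖ ^ 2) (Ioc 0 t) :=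
  (hz.norm.pow 2).integrableOn_Icc.mono_set Ioc_subset_Icc_self

lemma norm_sq_add_integral_le {t μ : ℝ} (ht : 0 ≤ t) (hμ : 0 < μ) {z g b : ℝ → ℂ}
    (hz : ContinuousOn z (Icc 0 t))
    (hd : ∀ x ∈ Ioo 0 t, HasDerivAt z (g x - b x - μ * z x) x)
    (hg : IntegrableOn (fun x => ‖g x‖ ^ 2) (Ioc 0 t))
    (hb : IntegrableOn (fun x => (b x * conj (z x)).re) (Ioc 0 t)) :
    ‖z t‖ ^ 2 + μ * ∫ x in Ioc 0 t, ‖z x‖ ^ 2 ≤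
      ‖z 0‖ ^ 2 + μ⁻¹ * (∫ x in Ioc 0 t, ‖g x‖ ^ 2) -
        2 * ∫ x in Ioc 0 t, (b x * conj (z x)).re := by
  have hz2 := (integrableOn_norm_sq hz).const_mul μ
  have hg2 := hg.const_mul μ⁻¹
  have hb2 := hb.const_mul 2
  have hgz : IntegrableOn (fun x => μ⁻¹ * ‖g x‖ ^ 2 - μ * ‖z x‖ ^ 2) (Ioc 0 t) := hg2.sub hz2
  have hle := intervalIntegral.sub_le_integral_of_hasDeriv_right_of_le ht (hz.norm.pow 2)
    (fun x hx => (hd x hx).norm_sq.hasDerivWithinAt)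
    ((integrableOn_Icc_iff_integrableOn_Ioc).2 (hgz.sub hb2))
    (fun x _ => two_mul_inner_damped_le hμ (z x) (g x) (b x))
  simp only [Pi.sub_apply, Pi.pow_apply] at hle
  rw [intervalIntegral.integral_of_le ht, integral_sub hgz hb2, integral_sub hg2 hz2,
    integral_const_mul, integral_const_mul, integral_const_mul] at hle
  linarith

/-- Every Fourier coefficient of `y` solves the corresponding coefficient equation of the forced
heat equation `dy/dt − νΔy = g` on `(0, T]` and is continuous up to time `0`. -/
structure IsHeatSol (ν T : ℝ) (y g : ℝ → Coef) : Prop where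
  continuousOn : ∀ k, ContinuousOn (fun t => y t k) (Icc 0 T)
  hasDerivAt : ∀ k, ∀ t ∈ Ioc 0 T,
    HasDerivAt (fun s => y s k) (g t k - ((ν * lam k : ℝ) : ℂ) * y t k) t

section HeatEquation

variable {ν T t : ℝ} {y y' g g' b : ℝ → Coef}

lemma IsHeatSol.sub (h : IsHeatSol ν T y g) (h' : IsHeatSol ν T y' g') :
    IsHeatSol ν T (y - y') (g - g') where
  continuousOn k := (h.continuousOn k).sub (h'.continuousOn k)
  hasDerivAt k t ht := ((h.hasDerivAt k t ht).sub (h'.hasDerivAt k t ht)).congr_deriv <| by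
    simp only [Pi.sub_apply]
    ring

lemma IsHeatSol.congr (h : IsHeatSol ν T y g) (hg : ∀ t ∈ Ioc 0 T, g t = g' t) :
    IsHeatSol ν T y g' :=
  ⟨h.continuousOn, fun k t ht => hg t ht ▸ h.hasDerivAt k t ht⟩

lemma IsHeatSol.mono (h : IsHeatSol ν T y g) (ht : t ≤ T) : IsHeatSol ν t y g :=
  ⟨fun k => (h.continuousOn k).mono (Icc_subset_Icc_right ht),
    fun k x hx => h.hasDerivAt k x ⟨hx.1, hx.2.trans ht⟩⟩

lemma IsHeatSol.aestronglyMeasurable (h : IsHeatSol ν T y g) (k : Freq) :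
    AEStronglyMeasurable (fun τ => y τ k) (volume.restrict (Ioc 0 T)) :=
  ((h.continuousOn k).mono Ioc_subset_Icc_self).aestronglyMeasurable measurableSet_Ioc

lemma IsHeatSol.aestronglyMeasurable_forcing (h : IsHeatSol ν T y g) (k : Freq) :
    AEStronglyMeasurable (fun τ => g τ k) (volume.restrict (Ioc 0 T)) :=
  NS2D.aestronglyMeasurable_forcing (h.continuousOn k) fun x hx =>
    h.hasDerivAt k x (Ioo_subset_Ioc_self hx)

lemma lintegral_ehSq {μ : Measure ℝ} (hy : ∀ k, AEStronglyMeasurable (fun τ => y τ k) μ)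
    (s : ℝ) : ∫⁻ τ, ehSq s (y τ) ∂μ = ∑' k, elam k ^ s * ∫⁻ τ, ‖y τ k‖ₑ ^ 2 ∂μ := by
  have hy2 (k : Freq) : AEMeasurable (fun τ => ‖y τ k‖ₑ ^ 2) μ := (hy k).enorm.pow_const 2
  simp only [ehSq]
  rw [lintegral_tsum fun k => (hy2 k).const_mul _]
  exact tsum_congr fun k => lintegral_const_mul'' _ (hy2 k)

lemma lintegral_enorm_sq_eq_ofReal {α E : Type*} [MeasurableSpace α] [NormedAddCommGroup E]
    {μ : Measure α} {z : α → E}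
    (hz : Integrable (fun x => ‖z x‖ ^ 2) μ) :
    ∫⁻ x, ‖z x‖ₑ ^ 2 ∂μ = ENNReal.ofReal (∫ x, ‖z x‖ ^ 2 ∂μ) := by
  rw [ofReal_integral_eq_lintegral_ofReal hz (.of_forall fun x => sq_nonneg _)]
  exact lintegral_congr fun x => by rw [ENNReal.ofReal_pow (norm_nonneg _), ofReal_norm]

lemma integrable_norm_sq_of_lintegral_ehSq_ne_top {μ : Measure ℝ}
    (hg : ∀ k, AEStronglyMeasurable (fun τ => g τ k) μ) {s : ℝ}
    (hgs : ∫⁻ τ, ehSq s (g τ) ∂μ ≠ ∞) (k : Freq) : Integrable (fun x => ‖g x k‖ ^ 2) μ := by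
  rw [lintegral_ehSq hg] at hgs
  refine ⟨(hg k).norm.pow 2, ?_⟩
  rw [HasFiniteIntegral]
  simp only [enorm_pow, enorm_norm]
  refine lt_top_iff_ne_top.2 fun htop => ENNReal.ne_top_of_tsum_ne_top hgs k ?_
  rw [htop, ENNReal.mul_top (ENNReal.rpow_pos
    (pos_iff_ne_zero.2 (elam_ne_zero k)) (elam_ne_top k)).ne']

lemma hasSum_integral_of_tsum_lintegral_ne_top {ι α : Type*} [Countable ι] [MeasurableSpace α]
    {μ : Measure α} {F : ι → α → ℝ} (hF : ∀ k, AEStronglyMeasurable (F k) μ)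
    (hsum : ∑' k, ∫⁻ x, ‖F k x‖ₑ ∂μ ≠ ∞) :
    HasSum (fun k => ∫ x, F k x ∂μ) (∫ x, ∑' k, F k x ∂μ) := by
  refine hasSum_integral_of_summable_integral_norm
    (fun k => ⟨hF k, (ENNReal.ne_top_of_tsum_ne_top hsum k).lt_top⟩) ?_
  simp only [integral_norm_eq_lintegral_enorm (hF _)]
  exact ENNReal.summable_toReal hsum

lemma ehSq_add_mul_lintegral_ehSq (hν : 0 ≤ ν) {μ : Measure ℝ} {z : ℝ → Coef}
    (hz : ∀ k, Integrable (fun x => ‖z x k‖ ^ 2) μ)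
    (hm : ∀ k, AEStronglyMeasurable (fun x => z x k) μ) (c : Coef) (s p : ℝ) :
    ehSq s c + ENNReal.ofReal ν * ∫⁻ x, ehSq (s + p) (z x) ∂μ =
      ∑' k, ENNReal.ofReal
        (lam k ^ s * (‖c k‖ ^ 2 + ν * lam k ^ p * ∫ x, ‖z x k‖ ^ 2 ∂μ)) := by
  rw [lintegral_ehSq hm, ehSq, ← ENNReal.tsum_mul_left, ← ENNReal.tsum_add]
  refine tsum_congr fun k => ?_
  have hl := lam_pos k
  rw [elam_rpow_mul_enorm_sq, lintegral_enorm_sq_eq_ofReal (hz k), elam_rpow_eq_ofReal,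
    ← ENNReal.ofReal_mul (by positivity), ← ENNReal.ofReal_mul hν,
    ← ENNReal.ofReal_add (by positivity) (by positivity), Real.rpow_add hl]
  ring_nf

/-- The constant of the parabolic energy estimates. -/
def energyConst (ν : ℝ) : ℝ≥0 := (1 + ν⁻¹.toNNReal) ^ 2

lemma add_le_energyConst_mul (hν : 0 < ν) {x y p q : ℝ≥0∞}
    (h : x + ENNReal.ofReal ν * y ≤ p + ENNReal.ofReal ν⁻¹ * q) :
    x + y ≤ energyConst ν * (p + q) := by
  set a := ENNReal.ofReal ν⁻¹
  have ha : a * ENNReal.ofReal ν = 1 := by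
    rw [← ENNReal.ofReal_mul (inv_pos.2 hν).le, inv_mul_cancel₀ hν.ne', ENNReal.ofReal_one]
  calc x + y = x + a * (ENNReal.ofReal ν * y) := by rw [← mul_assoc, ha, one_mul]
    _ ≤ (1 + a) * (x + ENNReal.ofReal ν * y) := by
        rw [one_add_mul]
        gcongr
        · exact le_self_add
        · exact le_add_self
    _ ≤ (1 + a) * (p + a * q) := by gcongr
    _ ≤ (1 + a) * ((1 + a) * (p + q)) := by
        gcongr
        rw [mul_add]
        gcongr
        · exact le_mul_of_one_le_left' le_self_add
        · exact le_add_self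
    _ = energyConst ν * (p + q) := by
        rw [← mul_assoc, ← sq]
        rfl

lemma aestronglyMeasurable_const_mul_re_mul_conj {α : Type*} [MeasurableSpace α] {μ : Measure α}
    {z w : α → ℂ} (hz : AEStronglyMeasurable z μ) (hw : AEStronglyMeasurable w μ) (r : ℝ) :
    AEStronglyMeasurable (fun x => r * (z x * conj (w x)).re) μ :=
  (Complex.continuous_re.comp_aestronglyMeasurable
    (hz.mul (RCLike.continuous_conj.comp_aestronglyMeasurable hw))).const_mul r

lemma IsHeatSol.lam_rpow_mul_energy_le (hν : 0 < ν) (hT : 0 ≤ T) (h : IsHeatSol ν T y (g - b))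
    (s : ℝ) {k : Freq} (hg : IntegrableOn (fun x => ‖g x k‖ ^ 2) (Ioc 0 T))
    (hb : IntegrableOn (fun x => lam k ^ s * (b x k * conj (y x k)).re) (Ioc 0 T)) :
    lam k ^ s * (‖y T k‖ ^ 2 + ν * lam k ^ (1 : ℝ) * ∫ x in Ioc 0 T, ‖y x k‖ ^ 2) ≤
      lam k ^ s * (‖y 0 k‖ ^ 2 + ν⁻¹ * lam k ^ (-1 : ℝ) * ∫ x in Ioc 0 T, ‖g x k‖ ^ 2) -
        2 * ∫ x in Ioc 0 T, lam k ^ s * (b x k * conj (y x k)).re := by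
  have hl := lam_pos k
  have hb' : IntegrableOn (fun x => (b x k * conj (y x k)).re) (Ioc 0 T) :=
    (integrable_const_mul_iff (Real.rpow_pos_of_pos hl s).ne'.isUnit _).1 hb
  have hk := norm_sq_add_integral_le hT (mul_pos hν hl) (h.continuousOn k)
    (fun x hx => h.hasDerivAt k x (Ioo_subset_Ioc_self hx)) hg hb'
  rw [integral_const_mul, Real.rpow_one, Real.rpow_neg_one, ← mul_inv]
  linear_combination lam k ^ s * hk

theorem IsHeatSol.energy_le_of_hInner_eq_zero (hν : 0 < ν) (hT : 0 ≤ T)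
    (h : IsHeatSol ν T y (g - b)) {s : ℝ}
    (hb : ∀ k, AEStronglyMeasurable (fun τ => b τ k) (volume.restrict (Ioc 0 T)))
    (hpair : ∑' k, ∫⁻ τ in Ioc 0 T, ‖lam k ^ s * (b τ k * conj (y τ k)).re‖ₑ ≠ ∞)
    (horth : ∀ τ ∈ Ioc 0 T, hInner s (b τ) (y τ) = 0) :
    ehSq s (y T) + ∫⁻ τ in Ioc 0 T, ehSq (s + 1) (y τ) ≤
      energyConst ν * (ehSq s (y 0) + ∫⁻ τ in Ioc 0 T, ehSq (s - 1) (g τ)) := by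
  have hg (k : Freq) : AEStronglyMeasurable (fun τ => g τ k) (volume.restrict (Ioc 0 T)) := by
    simpa only [Pi.sub_apply, sub_add_cancel] using
      (h.aestronglyMeasurable_forcing k).fun_add (hb k)
  have hF (k : Freq) : AEStronglyMeasurable (fun τ => lam k ^ s * (b τ k * conj (y τ k)).re)
      (volume.restrict (Ioc 0 T)) :=
    aestronglyMeasurable_const_mul_re_mul_conj (hb k) (h.aestronglyMeasurable k) _
  have hsum := hasSum_integral_of_tsum_lintegral_ne_top hF hpair
  change HasSum _ (∫ τ in Ioc 0 T, hInner s (b τ) (y τ)) at hsum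
  rw [setIntegral_eq_zero_of_forall_eq_zero horth] at hsum
  refine add_le_energyConst_mul hν ?_
  rcases eq_or_ne (∫⁻ τ in Ioc 0 T, ehSq (s - 1) (g τ)) ∞ with htop | hgs
  · rw [htop, ENNReal.mul_top (ENNReal.ofReal_pos.2 (inv_pos.2 hν)).ne', add_top]
    exact le_top
  have hg2 := integrable_norm_sq_of_lintegral_ehSq_ne_top hg hgs
  have hy2 (k : Freq) := integrableOn_norm_sq (h.continuousOn k)
  rw [sub_eq_add_neg, ehSq_add_mul_lintegral_ehSq hν.le hy2 h.aestronglyMeasurable,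
    ehSq_add_mul_lintegral_ehSq (inv_pos.2 hν).le hg2 hg]
  refine tsum_ofReal_le_of_hasSum_zero (fun k => ?_) (fun k => ?_)
    (by simpa only [mul_zero] using hsum.mul_left 2) fun k => ?_
  · have hl := lam_pos k
    positivity
  · have hl := lam_pos k
    positivity
  exact h.lam_rpow_mul_energy_le hν hT s (hg2 k)
    ⟨hF k, (ENNReal.ne_top_of_tsum_ne_top hpair k).lt_top⟩

theorem IsHeatSol.energy_le (hν : 0 < ν) (h : IsHeatSol ν T y g) (s : ℝ) (ht : t ∈ Icc 0 T) :
    ehSq s (y t) + ∫⁻ τ in Ioc 0 t, ehSq (s + 1) (y τ) ≤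
      energyConst ν * (ehSq s (y 0) + ∫⁻ τ in Ioc 0 t, ehSq (s - 1) (g τ)) := by
  refine IsHeatSol.energy_le_of_hInner_eq_zero (b := 0) hν ht.1 (by simpa using h.mono ht.2)
    (fun _ => aestronglyMeasurable_const) ?_ fun τ _ => ?_
  · simp
  · simp [hInner]

end HeatEquation

/-! ### Continuity in time -/

section Continuity

variable {s T : ℝ} {c d : Coef} {u : ℝ → Coef}

lemma FinH.sub (hc : FinH s c) (hd : FinH s d) : FinH s (c - d) :=
  finH_of_ehSq_ne_top (ehSq_sub_ne_top hc.ehSq_ne_top hd.ehSq_ne_top)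

lemma FinH.ehSq_eq_ofReal_hN_sq (h : FinH s c) : ehSq s c = ENNReal.ofReal (hN s c ^ 2) := by
  rw [h.ehSq_eq, hN, Real.sq_sqrt (hSq_nonneg s c)]

lemma FinH.norm_apply_le_hN (hs : 0 ≤ s) (h : FinH s c) (k : Freq) : ‖c k‖ ≤ hN s c :=
  Real.le_sqrt_of_sq_le <| (le_mul_of_one_le_left (sq_nonneg _)
    (Real.one_le_rpow (one_le_lam k) hs)).trans
      (h.le_tsum k fun j _ => lam_rpow_mul_norm_sq_nonneg s c j)

lemma ContH.continuousOn_apply (hu : ContH s T u) (hs : 0 ≤ s)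
    (hfin : ∀ t ∈ Icc 0 T, FinH s (u t)) (k : Freq) :
    ContinuousOn (fun t => u t k) (Icc 0 T) := by
  refine Metric.continuousOn_iff.2 fun t ht ε hε => ?_
  obtain ⟨δ, hδ, h⟩ := hu t ht ε hε
  refine ⟨δ, hδ, fun x hx hxt => ?_⟩
  rw [dist_eq_norm]
  exact (((hfin x hx).sub (hfin t ht)).norm_apply_le_hN hs k).trans_lt (h x hx hxt)

lemma ContH.exists_ehSq_le (hu : ContH s T u) (hfin : ∀ t ∈ Icc 0 T, FinH s (u t)) :
    ∃ M : ℝ≥0, ∀ t ∈ Icc 0 T, ehSq s (u t) ≤ M := by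
  refine isCompact_Icc.induction_on (p := fun S => ∃ M : ℝ≥0, ∀ t ∈ S, ehSq s (u t) ≤ M)
    ⟨0, by simp⟩ ?_ ?_ fun t ht => ?_
  · rintro S S' hS ⟨M, hM⟩
    exact ⟨M, fun t ht => hM t (hS ht)⟩
  · rintro S S' ⟨M, hM⟩ ⟨M', hM'⟩
    refine ⟨max M M', ?_⟩
    rintro t (ht | ht)
    · exact (hM t ht).trans (by simp)
    · exact (hM' t ht).trans (by simp)
  obtain ⟨δ, hδ, h⟩ := hu t ht 1 one_pos
  refine ⟨Icc 0 T ∩ Metric.ball t δ, inter_mem_nhdsWithin _ (Metric.ball_mem_nhds t hδ),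
    (2 * (1 + ehSq s (u t))).toNNReal, ?_⟩
  rintro x ⟨hx, hxt⟩
  have ht_top := (hfin t ht).ehSq_ne_top
  have hclose : ehSq s (u x - u t) ≤ 1 := by
    rw [((hfin x hx).sub (hfin t ht)).ehSq_eq_ofReal_hN_sq, ENNReal.ofReal_le_one]
    exact pow_le_one₀ (Real.sqrt_nonneg _) (h x hx hxt).le
  rw [ENNReal.coe_toNNReal (by finiteness)]
  calc ehSq s (u x) = ehSq s (u x - u t + u t) := by rw [sub_add_cancel]
    _ ≤ 2 * (ehSq s (u x - u t) + ehSq s (u t)) := ehSq_add_le _ _ _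
    _ ≤ 2 * (1 + ehSq s (u t)) := by gcongr

lemma MemL2H.lintegral_ehSq_ne_top (hu : MemL2H s T u) :
    ∫⁻ τ in Ioc 0 T, ehSq s (u τ) ≠ ∞ := by
  rw [setLIntegral_congr_fun measurableSet_Ioc fun t ht => (hu.1 t ht).2.ehSq_eq]
  exact ((hasFiniteIntegral_iff_ofReal (.of_forall fun t => hSq_nonneg s (u t))).1 hu.2.2).ne

end Continuity

/-! ### A priori bounds for the Navier–Stokes flow -/

section NavierStokes

variable {ν T t s σ : ℝ} {f θ : Coef} {u : ℝ → Coef}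

lemma IsNSSol.finH_one (h : IsNSSol ν f T θ u) (hθ : FinH 1 θ) (ht : t ∈ Icc 0 T) :
    FinH 1 (u t) := by
  rcases ht.1.eq_or_lt with rfl | h0
  · rwa [h.init]
  · exact (h.memL2H2.1 t ⟨h0, ht.2⟩).2.mono one_le_two

lemma IsNSSol.isHeatSol (h : IsNSSol ν f T θ u) (hθ : FinH 1 θ) :
    IsHeatSol ν T u ((fun _ => f) - fun t => Bc (u t) (u t)) where
  continuousOn := h.contH1.continuousOn_apply zero_le_one fun _ ht => h.finH_one hθ ht
  hasDerivAt k t ht := (h.deriv k t ht).congr_deriv (sub_right_comm _ _ _)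

lemma IsNSSol.mono (h : IsNSSol ν f T θ u) (ht : t ≤ T) : IsNSSol ν f t θ u where
  init := h.init
  real x hx := h.real x (Icc_subset_Icc_right ht hx)
  deriv k x hx := h.deriv k x (Ioc_subset_Ioc_right ht hx)
  contH1 x hx ε hε := by
    obtain ⟨δ, hδ, hx'⟩ := h.contH1 x (Icc_subset_Icc_right ht hx) ε hε
    exact ⟨δ, hδ, fun y hy => hx' y (Icc_subset_Icc_right ht hy)⟩
  memL2H2 := ⟨fun x hx => h.memL2H2.1 x (Ioc_subset_Ioc_right ht hx),
    h.memL2H2.2.mono_set (Ioc_subset_Ioc_right ht)⟩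

lemma tsum_enorm_pairing_le (s : ℝ) (c d : Coef) :
    ∑' k, ‖lam k ^ s * (c k * conj (d k)).re‖ₑ ≤ ehSq (s - 1) c + ehSq (s + 1) d := by
  rw [ehSq, ehSq, ← ENNReal.tsum_add]
  refine ENNReal.tsum_le_tsum fun k => ?_
  have hre : ‖(c k * conj (d k)).re‖ₑ ≤ ‖c k‖ₑ * ‖d k‖ₑ := by
    rw [← enorm_mul, ← ofReal_norm, ← ofReal_norm, norm_mul, ← Complex.norm_conj (d k),
      ← norm_mul]
    exact ENNReal.ofReal_le_ofReal (Complex.abs_re_le_norm _)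
  have hlam : ‖lam k ^ s‖ₑ = elam k ^ ((s - 1) / 2) * elam k ^ ((s + 1) / 2) := by
    rw [Real.enorm_of_nonneg (Real.rpow_nonneg (lam_pos k).le s), ← elam_rpow_eq_ofReal,
      ← ENNReal.rpow_add _ _ (elam_ne_zero k) (elam_ne_top k)]
    ring_nf
  calc ‖lam k ^ s * (c k * conj (d k)).re‖ₑ
      ≤ elam k ^ ((s - 1) / 2) * elam k ^ ((s + 1) / 2) * (‖c k‖ₑ * ‖d k‖ₑ) := by
        rw [enorm_mul, hlam]
        gcongr
    _ = elam k ^ ((s - 1) / 2) * ‖c k‖ₑ * (elam k ^ ((s + 1) / 2) * ‖d k‖ₑ) := by ring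
    _ ≤ 2 * (elam k ^ ((s - 1) / 2) * ‖c k‖ₑ * (elam k ^ ((s + 1) / 2) * ‖d k‖ₑ)) :=
        le_mul_of_one_le_left' one_le_two
    _ ≤ _ := two_mul_mul_le_sq_add_sq _ _
    _ = _ := by rw [mul_pow, mul_pow, rpow_half_sq, rpow_half_sq]

lemma lintegral_ehSq_Bc_self_le {K M : ℝ≥0} {p : ℝ}
    (hK : ∀ c, ehSq s (Bc c c) ≤ K * (ehSq σ c * ehSq p c))
    (hM : ∀ τ ∈ Ioc 0 T, ehSq σ (u τ) ≤ M) :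
    ∫⁻ τ in Ioc 0 T, ehSq s (Bc (u τ) (u τ)) ≤ K * M * ∫⁻ τ in Ioc 0 T, ehSq p (u τ) := by
  rw [← lintegral_const_mul' _ _ (by finiteness)]
  refine setLIntegral_mono' measurableSet_Ioc fun τ hτ => (hK _).trans ?_
  rw [mul_assoc]
  gcongr
  exact hM τ hτ

lemma exists_ehSq_Bc_self_le {r : ℝ} (hs : 1 ≤ s) (hr : 1 < r) :
    ∃ K : ℝ≥0, ∀ c, ehSq (s - 1) (Bc c c) ≤ K * (ehSq r c * ehSq s c) := by
  obtain ⟨K, hK⟩ := exists_ehSq_Bc_le hs hr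
  refine ⟨2 * K, fun c => (hK c c).trans_eq ?_⟩
  push_cast
  ring

lemma IsNSSol.tsum_lintegral_pairing_ne_top (h : IsNSSol ν f T θ u) (hθ : FinH 1 θ)
    (hB : ∀ k, AEStronglyMeasurable (fun τ => Bc (u τ) (u τ) k) (volume.restrict (Ioc 0 T))) :
    ∑' k, ∫⁻ τ in Ioc 0 T, ‖lam k ^ (1 : ℝ) * (Bc (u τ) (u τ) k * conj (u τ k)).re‖ₑ ≠ ∞ := by
  have hmeas (k : Freq) : AEMeasurable
      (fun τ => ‖lam k ^ (1 : ℝ) * (Bc (u τ) (u τ) k * conj (u τ k)).re‖ₑ)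
      (volume.restrict (Ioc 0 T)) :=
    (aestronglyMeasurable_const_mul_re_mul_conj (hB k)
      ((h.isHeatSol hθ).aestronglyMeasurable k) _).enorm
  obtain ⟨M, hM⟩ := h.contH1.exists_ehSq_le fun t ht => h.finH_one hθ ht
  obtain ⟨K, hK⟩ := exists_ehSq_Bc_self_le (s := 1) le_rfl one_lt_two
  have hu2 := h.memL2H2.lintegral_ehSq_ne_top
  have hB2 : ∫⁻ τ in Ioc 0 T, ehSq (1 - 1) (Bc (u τ) (u τ)) ≠ ∞ := by
    refine ne_top_of_le_ne_top ?_ (lintegral_ehSq_Bc_self_le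
      (fun c => (hK c).trans_eq (by rw [mul_comm (ehSq 2 c)]))
      fun τ hτ => hM τ (Ioc_subset_Icc_self hτ))
    finiteness
  have hu2' : AEMeasurable (fun τ => ehSq 2 (u τ)) (volume.restrict (Ioc 0 T)) :=
    .tsum fun k =>
      (((h.isHeatSol hθ).aestronglyMeasurable k).enorm.pow_const 2).const_mul _
  rw [← lintegral_tsum hmeas]
  refine ne_top_of_le_ne_top ?_ (lintegral_mono fun τ => tsum_enorm_pairing_le 1 _ _)
  rw [one_add_one_eq_two, lintegral_add_right' _ hu2']
  finiteness

theorem IsNSSol.enstrophy_le (hν : 0 < ν) (hT : 0 ≤ T) (h : IsNSSol ν f T θ u)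
    (hθ : FinH 1 θ) :
    ehSq 1 (u T) + ∫⁻ τ in Ioc 0 T, ehSq (1 + 1) (u τ) ≤
      energyConst ν * (ehSq 1 θ + ∫⁻ _ in Ioc 0 T, ehSq (1 - 1) f) := by
  have hheat := h.isHeatSol hθ
  have hB (k : Freq) : AEStronglyMeasurable (fun τ => Bc (u τ) (u τ) k)
      (volume.restrict (Ioc 0 T)) := by
    simpa only [Pi.sub_apply, sub_sub_cancel] using
      (aestronglyMeasurable_const (b := f k)).fun_sub (hheat.aestronglyMeasurable_forcing k)
  have henergy := hheat.energy_le_of_hInner_eq_zero hν hT hB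
    (h.tsum_lintegral_pairing_ne_top hθ hB) fun τ hτ =>
      hInner_one_Bc_self (h.real τ (Ioc_subset_Icc_self hτ)) (h.memL2H2.1 τ hτ).2.ehSq_ne_top
  rwa [h.init] at henergy

/-- `M` bounds the squared norm of `u` in `L^∞([0, T], Ḣ^s) ∩ L²([0, T], Ḣ^{s+1})`. -/
def ParabolicBound (s T : ℝ) (M : ℝ≥0) (u : ℝ → Coef) : Prop :=
  ∀ t ∈ Icc 0 T, ehSq s (u t) + ∫⁻ τ in Ioc 0 t, ehSq (s + 1) (u τ) ≤ M

/-- Strong solutions whose data and forcing are bounded in `Ḣ^s` and `Ḣ^{s-1}` are bounded in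
`L^∞([0, T], Ḣ^s) ∩ L²([0, T], Ḣ^{s+1})`. -/
def HasAprioriBound (ν T s : ℝ) : Prop :=
  ∀ F A : ℝ≥0, ∃ M : ℝ≥0, ∀ (f θ : Coef) (u : ℝ → Coef), ehSq (s - 1) f ≤ F → ehSq s θ ≤ A →
    IsNSSol ν f T θ u → ParabolicBound s T M u

lemma setLIntegral_ehSq_const_le {F : ℝ≥0} (hf : ehSq s f ≤ F) (ht : t ≤ T) :
    ∫⁻ _ in Ioc 0 t, ehSq s f ≤ (F * T.toNNReal : ℝ≥0) := by
  rw [setLIntegral_const, Real.volume_Ioc, sub_zero, ENNReal.coe_mul]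
  exact mul_le_mul' hf (ENNReal.ofReal_le_ofReal ht)

theorem hasAprioriBound_one (hν : 0 < ν) : HasAprioriBound ν T 1 := by
  refine fun F A => ⟨energyConst ν * (A + F * T.toNNReal), fun f θ u hf hθ hu t ht => ?_⟩
  have hθ1 : FinH 1 θ := finH_of_ehSq_ne_top (ne_top_of_le_ne_top ENNReal.coe_ne_top hθ)
  refine ((hu.mono ht.2).enstrophy_le hν ht.1 hθ1).trans ?_
  rw [ENNReal.coe_mul, ENNReal.coe_add]
  gcongr
  exact setLIntegral_ehSq_const_le hf ht.2

lemma HasAprioriBound.of_ehSq_Bc_le (hν : 0 < ν) (hσ : HasAprioriBound ν T σ) (h1σ : 1 ≤ σ)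
    (hσs : σ ≤ s) {K : ℝ≥0}
    (hK : ∀ c, ehSq (s - 1) (Bc c c) ≤ K * (ehSq σ c * ehSq (σ + 1) c)) :
    HasAprioriBound ν T s := by
  intro F A
  obtain ⟨M, hM⟩ := hσ F A
  refine ⟨energyConst ν * (A + 2 * (F * T.toNNReal + K * M * M)), fun f θ u hf hθ hu t ht => ?_⟩
  have hθσ : ehSq σ θ ≤ A := (ehSq_mono hσs θ).trans hθ
  have hθ1 : FinH 1 θ := (finH_of_ehSq_ne_top
    (ne_top_of_le_ne_top ENNReal.coe_ne_top hθσ)).mono h1σ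
  have hMu := hM f θ u ((ehSq_mono (by linarith) f).trans hf) hθσ hu
  have hB : ∫⁻ τ in Ioc 0 t, ehSq (s - 1) (Bc (u τ) (u τ)) ≤ K * M * M :=
    (lintegral_ehSq_Bc_self_le hK fun τ hτ =>
      le_self_add.trans (hMu τ ⟨hτ.1.le, hτ.2.trans ht.2⟩)).trans
        (by gcongr; exact le_add_self.trans (hMu t ht))
  refine ((hu.isHeatSol hθ1).energy_le hν s ht).trans ?_
  push_cast
  rw [hu.init]
  gcongr
  calc ∫⁻ τ in Ioc 0 t, ehSq (s - 1) (f - Bc (u τ) (u τ))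
      ≤ ∫⁻ τ in Ioc 0 t, 2 * (ehSq (s - 1) f + ehSq (s - 1) (Bc (u τ) (u τ))) :=
        lintegral_mono fun τ => ehSq_sub_le _ _ _
    _ = 2 * ((∫⁻ _ in Ioc 0 t, ehSq (s - 1) f) +
          ∫⁻ τ in Ioc 0 t, ehSq (s - 1) (Bc (u τ) (u τ))) := by
        rw [lintegral_const_mul' _ _ (by finiteness), lintegral_add_left measurable_const]
    _ ≤ 2 * (F * T.toNNReal + K * M * M) := by
        gcongr
        exact setLIntegral_ehSq_const_le hf ht.2

lemma hasAprioriBound_of_le_three_halves (hν : 0 < ν) (hs : 1 ≤ s) (hs' : s ≤ 3 / 2) :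
    HasAprioriBound ν T s := by
  obtain ⟨K, hK⟩ := exists_ehSq_Bc_self_le (s := 3 / 2) (r := 3 / 2) (by norm_num) (by norm_num)
  refine (hasAprioriBound_one hν).of_ehSq_Bc_le hν le_rfl hs (K := K) fun c => ?_
  calc ehSq (s - 1) (Bc c c) ≤ ehSq (3 / 2 - 1) (Bc c c) := ehSq_mono (by linarith) _
    _ ≤ K * ehSq ((1 + (1 + 1)) / 2) c ^ 2 := by
        rw [sq]
        norm_num only at hK ⊢
        exact hK c
    _ ≤ K * (ehSq 1 c * ehSq (1 + 1) c) := by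
        gcongr
        exact ehSq_midpoint_sq_le _ _ c

theorem hasAprioriBound (hν : 0 < ν) (hs : 1 ≤ s) : HasAprioriBound ν T s := by
  obtain ⟨n, hn⟩ := exists_nat_ge (s - 3 / 2)
  induction n generalizing s with
  | zero => exact hasAprioriBound_of_le_three_halves hν hs (by simpa using hn)
  | succ n ih =>
    rcases le_total s (3 / 2) with hs' | hs'
    · exact hasAprioriBound_of_le_three_halves hν hs hs'
    have hσ : 1 < max (s - 1) (3 / 2) := lt_max_of_lt_right (by norm_num)
    have hsσ : s ≤ max (s - 1) (3 / 2) + 1 := by linarith [le_max_left (s - 1) (3 / 2)]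
    obtain ⟨K, hK⟩ := exists_ehSq_Bc_self_le hs hσ
    push_cast at hn
    refine (ih hσ.le ?_).of_ehSq_Bc_le hν hσ.le (max_le (by linarith) hs') (K := K)
      fun c => (hK c).trans ?_
    · rw [sub_le_iff_le_add]
      exact max_le (by linarith) (by linarith [n.cast_nonneg (α := ℝ)])
    · gcongr
      exact ehSq_mono hsσ c

end NavierStokes

/-! ### An integral Gronwall inequality -/

lemma mul_lintegral_exp_le (c : ℝ≥0) {t : ℝ} (ht : 0 ≤ t) :
    c * ∫⁻ τ in Ioc 0 t, ENNReal.ofReal (Real.exp (c * τ)) ≤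
      ENNReal.ofReal (Real.exp (c * t)) := by
  have hint : IntervalIntegrable (fun τ => c * Real.exp (c * τ)) volume 0 t :=
    (by fun_prop : Continuous fun τ : ℝ => c * Real.exp (c * τ)).intervalIntegrable _ _
  have hderiv (τ : ℝ) : HasDerivAt (fun x => Real.exp (c * x)) (c * Real.exp (c * τ)) τ := by
    simpa [mul_comm] using ((hasDerivAt_id τ).const_mul (c : ℝ)).exp
  calc c * ∫⁻ τ in Ioc 0 t, ENNReal.ofReal (Real.exp (c * τ))
      = ∫⁻ τ in Ioc 0 t, ENNReal.ofReal (c * Real.exp (c * τ)) := by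
        rw [← lintegral_const_mul' _ _ ENNReal.coe_ne_top]
        simp only [ENNReal.ofReal_mul c.coe_nonneg, ENNReal.ofReal_coe_nnreal]
    _ = ENNReal.ofReal (Real.exp (c * t) - Real.exp (c * 0)) := by
        rw [← ofReal_integral_eq_lintegral_ofReal hint.1 (.of_forall fun τ => by positivity),
          ← intervalIntegral.integral_of_le ht,
          intervalIntegral.integral_eq_sub_of_hasDerivAt (fun τ _ => hderiv τ) hint]
    _ ≤ ENNReal.ofReal (Real.exp (c * t)) :=
        ENNReal.ofReal_le_ofReal (sub_le_self _ (Real.exp_pos _).le)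

/- Dividing `y` by `e^{2Kt}` makes the integral term at most half of the supremum of the quotient,
so that it can be absorbed. -/
theorem le_mul_exp_of_le_add_mul_lintegral {T : ℝ} {K M : ℝ≥0} {A : ℝ≥0∞} {y : ℝ → ℝ≥0∞}
    (hM : ∀ t ∈ Icc 0 T, y t ≤ M)
    (hy : ∀ t ∈ Icc 0 T, y t ≤ A + K * ∫⁻ τ in Ioc 0 t, y τ) {t : ℝ} (ht : t ∈ Icc 0 T) :
    y t ≤ 2 * A * ENNReal.ofReal (Real.exp (2 * K * t)) := by
  set w : ℝ → ℝ≥0∞ := fun t => ENNReal.ofReal (Real.exp (2 * K * t))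
  have hw0 (t : ℝ) : w t ≠ 0 := (ENNReal.ofReal_pos.2 (Real.exp_pos _)).ne'
  have hw1 {t : ℝ} (ht : 0 ≤ t) : 1 ≤ w t :=
    ENNReal.one_le_ofReal.2 (Real.one_le_exp (by positivity))
  set Y : ℝ≥0∞ := ⨆ t ∈ Icc 0 T, y t / w t
  have hyY (t : ℝ) (ht : t ∈ Icc 0 T) : y t ≤ Y * w t :=
    (ENNReal.div_le_iff (hw0 t) ENNReal.ofReal_ne_top).1 (le_iSup₂_of_le t ht le_rfl)
  have hYtop : Y ≠ ∞ := ne_top_of_le_ne_top ENNReal.coe_ne_top <| iSup₂_le fun t ht =>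
    ENNReal.div_le_of_le_mul ((hM t ht).trans (le_mul_of_one_le_right' (hw1 ht.1)))
  have habsorb (t : ℝ) (ht : t ∈ Icc 0 T) : y t * 2 ≤ (2 * A + Y) * w t := by
    have hwt := mul_lintegral_exp_le (2 * K) ht.1
    push_cast at hwt
    calc y t * 2 ≤ (A + K * ∫⁻ τ in Ioc 0 t, Y * w τ) * 2 := by
          gcongr
          refine (hy t ht).trans (add_le_add_right (mul_le_mul_right ?_ _) _)
          exact setLIntegral_mono' measurableSet_Ioc fun τ hτ =>
            hyY τ ⟨hτ.1.le, hτ.2.trans ht.2⟩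
      _ = 2 * A + Y * (2 * K * ∫⁻ τ in Ioc 0 t, w τ) := by
          rw [lintegral_const_mul' _ _ hYtop]
          ring
      _ ≤ 2 * A * w t + Y * w t := by
          exact add_le_add (le_mul_of_one_le_right' (hw1 ht.1)) (mul_le_mul_right hwt _)
      _ = (2 * A + Y) * w t := (add_mul _ _ _).symm
  have hY2 : Y * 2 ≤ 2 * A + Y := by
    refine (ENNReal.le_div_iff_mul_le (by simp) (by simp)).1 (iSup₂_le fun t ht => ?_)
    rw [ENNReal.div_le_iff (hw0 t) ENNReal.ofReal_ne_top, ← ENNReal.mul_div_right_comm]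
    exact (ENNReal.le_div_iff_mul_le (by simp) (by simp)).2 (habsorb t ht)
  have hYA : Y ≤ 2 * A := by
    rw [mul_two] at hY2
    exact (ENNReal.add_le_add_iff_right hYtop).1 hY2
  exact (hyY t ht).trans (by gcongr)

/-! ### The linearisation error -/

section Linearisation

variable {ν T s : ℝ}

lemma IsHeatSol.ehSq_le_add_mul_lintegral (hν : 0 < ν) {y g : ℝ → Coef} (h : IsHeatSol ν T y g)
    {D : ℝ≥0∞} {K : ℝ≥0} (hg : ∀ t ∈ Ioc 0 T, ehSq (s - 1) (g t) ≤ D + K * ehSq s (y t))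
    {t : ℝ} (ht : t ∈ Icc 0 T) :
    ehSq s (y t) ≤ energyConst ν * (1 + T.toNNReal) * (ehSq s (y 0) + D) +
      (energyConst ν * K : ℝ≥0) * ∫⁻ τ in Ioc 0 t, ehSq s (y τ) := by
  set E := energyConst ν
  have hDt : D * ENNReal.ofReal t ≤ D * T.toNNReal := by
    gcongr
    exact ENNReal.ofReal_le_ofReal ht.2
  calc ehSq s (y t) ≤ E * (ehSq s (y 0) + ∫⁻ τ in Ioc 0 t, ehSq (s - 1) (g τ)) :=
        le_self_add.trans (h.energy_le hν s ht)
    _ ≤ E * (ehSq s (y 0) + ∫⁻ τ in Ioc 0 t, (D + K * ehSq s (y τ))) :=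
        mul_le_mul_right (add_le_add_right (setLIntegral_mono' measurableSet_Ioc
          fun τ hτ => hg τ ⟨hτ.1, hτ.2.trans ht.2⟩) _) _
    _ = E * (ehSq s (y 0) + D * ENNReal.ofReal t) +
          (E * K : ℝ≥0) * ∫⁻ τ in Ioc 0 t, ehSq s (y τ) := by
        rw [lintegral_add_left measurable_const, lintegral_const_mul' _ _ ENNReal.coe_ne_top,
          setLIntegral_const, Real.volume_Ioc, sub_zero, ENNReal.coe_mul]
        ring
    _ ≤ _ := by
        rw [mul_assoc]
        gcongr
        rw [one_add_mul, mul_comm (T.toNNReal : ℝ≥0∞), add_mul]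
        exact add_le_add le_self_add (hDt.trans le_add_self)

theorem IsHeatSol.exists_ehSq_le_of_ehSq_forcing_le (hν : 0 < ν) (K : ℝ≥0) :
    ∃ C : ℝ≥0, ∀ (y g : ℝ → Coef) (D : ℝ≥0∞) (M : ℝ≥0), IsHeatSol ν T y g →
      (∀ t ∈ Icc 0 T, ehSq s (y t) ≤ M) →
      (∀ t ∈ Ioc 0 T, ehSq (s - 1) (g t) ≤ D + K * ehSq s (y t)) →
      ∀ t ∈ Icc 0 T, ehSq s (y t) ≤ C * (ehSq s (y 0) + D) := by
  set E := energyConst ν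
  refine ⟨2 * (E * (1 + T.toNNReal)) * (Real.exp (2 * (E * K) * T)).toNNReal,
    fun y g D M h hM hg t ht => ?_⟩
  refine (le_mul_exp_of_le_add_mul_lintegral hM
    (fun t ht => h.ehSq_le_add_mul_lintegral hν hg ht) ht).trans ?_
  push_cast
  calc 2 * (E * (1 + T.toNNReal) * (ehSq s (y 0) + D)) *
        ENNReal.ofReal (Real.exp (2 * (E * K) * t))
      ≤ 2 * (E * (1 + T.toNNReal) * (ehSq s (y 0) + D)) *
        ENNReal.ofReal (Real.exp (2 * (E * K) * T)) := by
        gcongr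
        exact ht.2
    _ = 2 * (E * (1 + T.toNNReal)) * ENNReal.ofReal (Real.exp (2 * (E * K) * T)) *
        (ehSq s (y 0) + D) := by ring

lemma ehSq_sub_le_of_le {M N : ℝ≥0} {c d : Coef} (hc : ehSq s c ≤ M) (hd : ehSq s d ≤ N) :
    ehSq s (c - d) ≤ (2 * (M + N) : ℝ≥0) := by
  push_cast
  exact (ehSq_sub_le _ _ _).trans (by gcongr)

lemma exists_ehSq_Bc_add_Bc_le (hs : 1 < s) :
    ∃ K : ℝ≥0, ∀ c d y, ehSq (s - 1) (Bc c y + Bc y d) ≤ K * (ehSq s c + ehSq s d) * ehSq s y := by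
  obtain ⟨K, hK⟩ := exists_ehSq_Bc_le_mul hs
  refine ⟨2 * K, fun c d y => ?_⟩
  calc ehSq (s - 1) (Bc c y + Bc y d) ≤ 2 * (ehSq (s - 1) (Bc c y) + ehSq (s - 1) (Bc y d)) :=
        ehSq_add_le _ _ _
    _ ≤ 2 * (K * (ehSq s c * ehSq s y) + K * (ehSq s y * ehSq s d)) := by
        gcongr
        exacts [hK c y, hK y d]
    _ = (2 * K : ℝ≥0) * (ehSq s c + ehSq s d) * ehSq s y := by
        push_cast
        ring

lemma exists_ehSq_Bc_self_add_Bc_add_Bc_le (hs : 1 < s) :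
    ∃ K : ℝ≥0, ∀ c v y, ehSq (s - 1) (Bc v v + (Bc c y + Bc y c)) ≤
      K * ehSq s v ^ 2 + K * ehSq s c * ehSq s y := by
  obtain ⟨K, hK⟩ := exists_ehSq_Bc_le_mul hs
  obtain ⟨K', hK'⟩ := exists_ehSq_Bc_add_Bc_le hs
  refine ⟨2 * K + 4 * K', fun c v y => ?_⟩
  calc ehSq (s - 1) (Bc v v + (Bc c y + Bc y c))
      ≤ 2 * (ehSq (s - 1) (Bc v v) + ehSq (s - 1) (Bc c y + Bc y c)) := ehSq_add_le _ _ _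
    _ ≤ 2 * (K * (ehSq s v * ehSq s v) + K' * (ehSq s c + ehSq s c) * ehSq s y) := by
        gcongr
        exacts [hK v v, hK' c c y]
    _ = 2 * K * ehSq s v ^ 2 + 4 * K' * ehSq s c * ehSq s y := by ring
    _ ≤ _ := by
        push_cast
        gcongr
        · exact le_self_add
        · exact le_add_self

lemma Bc_self_sub_Bc_self {c d : Coef} (hs : 1 < s) (hc : ehSq s c ≠ ∞) (hd : ehSq s d ≠ ∞) :
    Bc d d - Bc c c = Bc d (d - c) + Bc (d - c) c := by
  have hv := ehSq_sub_ne_top hd hc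
  have hright := Bc_add_right hs hd hv hc
  have hleft := Bc_add_left hs hv hc hc
  rw [sub_add_cancel] at hright hleft
  rw [hright, hleft]
  abel

lemma Bc_self_sub_linearisation {c d U : Coef} (hs : 1 < s) (hc : ehSq s c ≠ ∞)
    (hd : ehSq s d ≠ ∞) (hU : ehSq s U ≠ ∞) :
    Bc d d - Bc c c - (Bc c U + Bc U c) =
      Bc (d - c) (d - c) + (Bc c (d - c - U) + Bc (d - c - U) c) := by
  have hv := ehSq_sub_ne_top hd hc
  have hr := ehSq_sub_ne_top hv hU
  have hd_left := Bc_add_left hs hv hc hv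
  have hv_right := Bc_add_right hs hc hr hU
  have hv_left := Bc_add_left hs hr hU hc
  rw [sub_add_cancel] at hd_left hv_right hv_left
  rw [Bc_self_sub_Bc_self hs hc hd, hd_left, hv_left, hv_right]
  abel

variable {M : ℝ≥0} {f θ θ' ξ : Coef} {u u' U : ℝ → Coef}

lemma IsNSSol.isHeatSol_of_ehSq_le (hs : 1 ≤ s) (hT : 0 ≤ T) (h : IsNSSol ν f T θ u)
    (hM : ∀ t ∈ Icc 0 T, ehSq s (u t) ≤ M) :
    IsHeatSol ν T u ((fun _ => f) - fun t => Bc (u t) (u t)) := by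
  have hθ : ehSq s θ ≤ M := h.init ▸ hM 0 (left_mem_Icc.2 hT)
  exact h.isHeatSol ((finH_of_ehSq_ne_top (ne_top_of_le_ne_top ENNReal.coe_ne_top hθ)).mono hs)

lemma IsNSSol.isHeatSol_sub (hs : 1 < s) (hT : 0 ≤ T) (h : IsNSSol ν f T θ u)
    (h' : IsNSSol ν f T θ' u') (hM : ∀ t ∈ Icc 0 T, ehSq s (u t) ≤ M)
    (hM' : ∀ t ∈ Icc 0 T, ehSq s (u' t) ≤ M) :
    IsHeatSol ν T (u' - u) fun t => -(Bc (u' t) (u' t - u t) + Bc (u' t - u t) (u t)) := by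
  refine ((h'.isHeatSol_of_ehSq_le hs.le hT hM').sub
    (h.isHeatSol_of_ehSq_le hs.le hT hM)).congr fun t ht => ?_
  have ht' := Ioc_subset_Icc_self ht
  rw [← Bc_self_sub_Bc_self hs (ne_top_of_le_ne_top ENNReal.coe_ne_top (hM t ht'))
    (ne_top_of_le_ne_top ENNReal.coe_ne_top (hM' t ht')), neg_sub]
  exact sub_sub_sub_cancel_left _ _ _

lemma IsLinSol.isHeatSol (hs : 0 ≤ s) (hU : IsLinSol ν u T ξ U) (hcont : ContH s T U)
    (hfin : ∀ t ∈ Icc 0 T, FinH s (U t)) :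
    IsHeatSol ν T U fun t => -(Bc (u t) (U t) + Bc (U t) (u t)) where
  continuousOn := hcont.continuousOn_apply hs hfin
  hasDerivAt k t ht := (hU.deriv k t ht).congr_deriv <| by
    simp only [Pi.neg_apply, Pi.add_apply, Pi.zero_apply]
    ring

lemma isHeatSol_linearisation_error (hs : 1 < s) (hT : 0 ≤ T) (h : IsNSSol ν f T θ u)
    (h' : IsNSSol ν f T θ' u') (hM : ∀ t ∈ Icc 0 T, ehSq s (u t) ≤ M)
    (hM' : ∀ t ∈ Icc 0 T, ehSq s (u' t) ≤ M) (hU : IsLinSol ν u T ξ U) (hcont : ContH s T U)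
    (hfin : ∀ t ∈ Icc 0 T, FinH s (U t)) :
    IsHeatSol ν T (u' - u - U) fun t => -(Bc (u' t - u t) (u' t - u t) +
      (Bc (u t) (u' t - u t - U t) + Bc (u' t - u t - U t) (u t))) := by
  refine ((h.isHeatSol_sub hs hT h' hM hM').sub
    (hU.isHeatSol (zero_le_one.trans hs.le) hcont hfin)).congr fun t ht => ?_
  have ht' := Ioc_subset_Icc_self ht
  have hu := ne_top_of_le_ne_top ENNReal.coe_ne_top (hM t ht')
  have hu' := ne_top_of_le_ne_top ENNReal.coe_ne_top (hM' t ht')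
  rw [← Bc_self_sub_linearisation hs hu hu' (hfin t ht').ehSq_ne_top,
    Bc_self_sub_Bc_self hs hu hu', Pi.sub_apply]
  abel

theorem exists_ehSq_sub_le (hν : 0 < ν) (hs : 1 < s) (M : ℝ≥0) :
    ∃ C : ℝ≥0, ∀ (f θ θ' : Coef) (u u' : ℝ → Coef),
      IsNSSol ν f T θ u → IsNSSol ν f T θ' u' →
      (∀ t ∈ Icc 0 T, ehSq s (u t) ≤ M) → (∀ t ∈ Icc 0 T, ehSq s (u' t) ≤ M) →
      ∀ t ∈ Icc 0 T, ehSq s (u' t - u t) ≤ C * ehSq s (θ' - θ) := by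
  obtain ⟨K, hK⟩ := exists_ehSq_Bc_add_Bc_le hs
  obtain ⟨C, hC⟩ := IsHeatSol.exists_ehSq_le_of_ehSq_forcing_le (T := T) (s := s) hν (K * (M + M))
  refine ⟨C, fun f θ θ' u u' hu hu' hM hM' t ht => ?_⟩
  have hheat := hu.isHeatSol_sub hs (ht.1.trans ht.2) hu' hM hM'
  have hlip := hC _ _ 0 _ hheat
    (fun t ht => ehSq_sub_le_of_le (hM' t ht) (hM t ht)) (fun t ht => ?_) t ht
  · rwa [Pi.sub_apply, Pi.sub_apply, hu.init, hu'.init, add_zero] at hlip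
  rw [ehSq_neg, zero_add]
  refine (hK _ _ _).trans ?_
  push_cast
  have ht' := Ioc_subset_Icc_self ht
  exact mul_le_mul_left (mul_le_mul_right (add_le_add (hM' t ht') (hM t ht')) _) _

theorem exists_ehSq_linearisation_error_le (hν : 0 < ν) (hs : 1 < s) (M : ℝ≥0) :
    ∃ C : ℝ≥0, ∀ (f θ θ' : Coef) (u u' U : ℝ → Coef),
      IsNSSol ν f T θ u → IsNSSol ν f T θ' u' →
      (∀ t ∈ Icc 0 T, ehSq s (u t) ≤ M) → (∀ t ∈ Icc 0 T, ehSq s (u' t) ≤ M) →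
      IsLinSol ν u T (θ' - θ) U → ContH s T U → (∀ t ∈ Icc 0 T, FinH s (U t)) →
      ∀ t ∈ Icc 0 T, ehSq s (u' t - u t - U t) ≤ C * ehSq s (θ' - θ) ^ 2 := by
  obtain ⟨L, hL⟩ := exists_ehSq_sub_le (T := T) hν hs M
  obtain ⟨K, hK⟩ := exists_ehSq_Bc_self_add_Bc_add_Bc_le hs
  obtain ⟨C, hC⟩ := IsHeatSol.exists_ehSq_le_of_ehSq_forcing_le (T := T) (s := s) hν (K * M)
  refine ⟨C * (K * L ^ 2), fun f θ θ' u u' U hu hu' hM hM' hU hcont hfin t ht => ?_⟩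
  have hheat := isHeatSol_linearisation_error hs (ht.1.trans ht.2) hu hu' hM hM' hU hcont hfin
  obtain ⟨N, hN⟩ := hcont.exists_ehSq_le hfin
  have hbound (t : ℝ) (ht : t ∈ Icc 0 T) := ehSq_sub_le_of_le
    (ehSq_sub_le_of_le (hM' t ht) (hM t ht)) (hN t ht)
  have hinit : ehSq s ((u' - u - U) 0) = 0 := by
    simp [hu.init, hu'.init, hU.init, ehSq]
  have herror := hC _ _ (K * (L * ehSq s (θ' - θ)) ^ 2) _ hheat hbound (fun t ht => ?_) t ht
  · rw [hinit, zero_add] at herror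
    refine herror.trans_eq ?_
    push_cast
    ring
  have ht' := Ioc_subset_Icc_self ht
  rw [ehSq_neg]
  refine (hK _ _ _).trans ?_
  push_cast
  gcongr K * ?_ ^ 2 + K * ?_ * _
  exacts [hL f θ θ' u u' hu hu' hM hM' t ht', hM t ht']

end Linearisation

lemma hN_le_sqrt_mul_sq {r s : ℝ} {c d : Coef} {C : ℝ≥0} (hd : FinH r d)
    (h : ehSq s c ≤ C * ehSq r d ^ 2) : hN s c ≤ Real.sqrt C * hN r d ^ 2 := by
  have hd_top := hd.ehSq_ne_top
  have hc : FinH s c := finH_of_ehSq_ne_top (ne_top_of_le_ne_top (by finiteness) h)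
  rw [hc.ehSq_eq_ofReal_hN_sq, hd.ehSq_eq_ofReal_hN_sq, ← ENNReal.ofReal_pow (sq_nonneg _),
    ← ENNReal.ofReal_coe_nnreal, ← ENNReal.ofReal_mul C.coe_nonneg,
    ENNReal.ofReal_le_ofReal_iff (by positivity)] at h
  refine (sq_le_sq₀ (Real.sqrt_nonneg _) (by positivity)).1 ?_
  rwa [mul_pow, Real.sq_sqrt C.coe_nonneg]

lemma FinH.ehSq_le_of_hN_le {s B : ℝ} {c : Coef} (hc : FinH s c) (h : hN s c ≤ B) :
    ehSq s c ≤ (B ^ 2).toNNReal := by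
  rw [hc.ehSq_eq_ofReal_hN_sq]
  exact ENNReal.ofReal_le_ofReal (pow_le_pow_left₀ (Real.sqrt_nonneg _) h 2)

theorem statement9_general {s : ℝ} (hs : 1 < s) (T ν : ℝ) (hν : 0 < ν) (R B : ℝ) :
    ∃ C : ℝ, 0 < C ∧ ∀ (f θ θ' : Coef) (uθ uθ' U : ℝ → Coef),
      FinH (s - 1) f → hN (s - 1) f ≤ R → FinH s θ → FinH s θ' → hN s θ ≤ B → hN s θ' ≤ B →
      IsNSSol ν f T θ uθ → IsNSSol ν f T θ' uθ' →
      IsLinSol ν uθ T (θ' - θ) U → ContH s T U → (∀ t ∈ Ioc 0 T, FinH s (U t)) →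
      ∀ t ∈ Icc 0 T, hN s (uθ' t - uθ t - U t) ≤ C * hN s (θ' - θ) ^ 2 := by
  obtain ⟨M, hM⟩ := hasAprioriBound (T := T) hν hs.le (R ^ 2).toNNReal (B ^ 2).toNNReal
  obtain ⟨C, hC⟩ := exists_ehSq_linearisation_error_le (T := T) hν hs M
  refine ⟨Real.sqrt C + 1, by positivity, ?_⟩
  intro f θ θ' uθ uθ' U hf hfR hθ hθ' hθB hθ'B hu hu' hU hcont hfin t ht
  have hflow {θ u} (hθ : FinH s θ) (hθB : hN s θ ≤ B) (hu : IsNSSol ν f T θ u) :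
      ∀ t ∈ Icc 0 T, ehSq s (u t) ≤ M := fun t ht =>
    le_self_add.trans (hM f θ u (hf.ehSq_le_of_hN_le hfR) (hθ.ehSq_le_of_hN_le hθB) hu t ht)
  have hUfin (t : ℝ) (ht : t ∈ Icc 0 T) : FinH s (U t) := by
    rcases ht.1.eq_or_lt with rfl | h0
    · exact hU.init ▸ hθ'.sub hθ
    · exact hfin t ⟨h0, ht.2⟩
  refine (hN_le_sqrt_mul_sq (hθ'.sub hθ) (hC f θ θ' uθ uθ' U hu hu' (hflow hθ hθB hu)
    (hflow hθ' hθ'B hu') hU hcont hUfin t ht)).trans ?_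
  gcongr
  exact le_add_of_nonneg_right zero_le_one

end NS2D

namespace NS2D

/-- Proposition `PropLinQuad`. Quadratic approximation of
the Navier–Stokes flow by its linearisation: for `a ∈ ℤ`, `a ≥ 2`, all
`f ∈ Ḣ^{a−1}_⋄` and `B > 0`, there is `C = C(ν,T,‖f‖_{Ḣ^{a−1}},a,B) > 0`
such that for all `θ, θ' ∈ Ḣ^a_⋄` with `‖θ‖_{Ḣ^a} + ‖θ'‖_{Ḣ^a} ≤ B`,
`sup_{0≤t≤T} ‖u_{θ'}(t) − u_θ(t) − 𝕀_θ[θ'−θ](t)‖_{Ḣ^a} ≤ C ‖θ'−θ‖²_{Ḣ^a}`. -/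
theorem statement9 (a : ℤ) (ha : 2 ≤ a) (T ν : ℝ) (hT : 0 < T) (hν : 0 < ν)
    (f : Coef) (hf : MemH ((a : ℝ) - 1) f) (B : ℝ) (hB : 0 < B) :
    ∃ C : ℝ, 0 < C ∧
      ∀ (θ θ' : Coef) (uθ uθ' : ℝ → Coef),
        MemH (a : ℝ) θ → MemH (a : ℝ) θ' → hN (a : ℝ) θ + hN (a : ℝ) θ' ≤ B →
        IsNSSol ν f T θ uθ → IsNSSol ν f T θ' uθ' →
        ∀ U : ℝ → Coef, IsLinSol ν uθ T (θ' - θ) U → ContH (a : ℝ) T U →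
          MemL2H ((a : ℝ) + 1) T U →
          ∀ t ∈ Icc (0:ℝ) T,
            hN (a : ℝ) (uθ' t - uθ t - U t) ≤ C * hN (a : ℝ) (θ' - θ) ^ 2 := by
  obtain ⟨C, hC, h⟩ := statement9_general (s := a) (by exact_mod_cast ha) T ν hν (hN (a - 1) f) B
  refine ⟨C, hC, fun θ θ' uθ uθ' hθ hθ' hle hu hu' U hU hcont hL2 =>
    h f θ θ' uθ uθ' U hf.2 le_rfl hθ.2 hθ'.2
      ((le_add_of_nonneg_right (Real.sqrt_nonneg _)).trans hle)
      ((le_add_of_nonneg_left (Real.sqrt_nonneg _)).trans hle) hu hu' hU hcont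
      fun t ht => (hL2.1 t ht).2.mono (le_add_of_nonneg_right zero_le_one)⟩

end NS2D
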